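/- arXiv:math/0403032 — 7 statements merged into one kernel-verified Lean document; each statement's English description precedes it below -/
import Mathlib

section
/- Let K be a field of characteristic zero, V a finite-dimensional K-vector space with a non-degenerate alternating bilinear form h, and A an automorphism of V that is self-adjoint with respect to h, i.e. h(Ax,y) = h(x,Ay) for all x,y ∈ V. Then there exists an automorphism B of V such that h(Ax,y) = h(Bx,By) for all x,y ∈ V (that is, A = B̂B where B̂ is the adjoint of B with respect to h). -/
/-!
The form `g x y = h (A x) y` is alternating, because self-adjointness of `A` and antisymmetry of
`h` give `h (A x) x = -h (A x) x`, and it is non-degenerate because `A` is invertible. Two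
non-degenerate alternating forms on spaces of the same dimension are isometric, as one sees by
splitting off a hyperbolic plane from each, and an isometry from `g` to `h` is the required `B`.
-/

section CommSemiring

variable {R M₁ M₂ : Type*} [CommSemiring R] [AddCommMonoid M₁] [AddCommMonoid M₂] [Module R M₁]
  [Module R M₂] {B₁ : LinearMap.BilinForm R M₁} {B₂ : LinearMap.BilinForm R M₂}

theorem equivalent_of_subsingleton [Subsingleton M₁] [Subsingleton M₂] : B₁.Equivalent B₂ :=
  ⟨{ (0 : M₁ ≃ₗ[R] M₂) with map_app' := fun x y => by simp [Subsingleton.elim x 0] }⟩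

theorem equivalent_of_basis {ι : Type*} (b₁ : Module.Basis ι R M₁) (b₂ : Module.Basis ι R M₂)
    (hb : ∀ i j, B₁ (b₁ i) (b₁ j) = B₂ (b₂ i) (b₂ j)) : B₁.Equivalent B₂ := by
  let e : M₁ ≃ₗ[R] M₂ := b₁.equiv b₂ (Equiv.refl ι)
  have comp_eq : B₂.comp e.toLinearMap e.toLinearMap = B₁ :=
    LinearMap.BilinForm.ext_basis b₁ fun i j => by simp [e, hb]
  exact ⟨{ e with map_app' := fun x y => LinearMap.congr_fun₂ comp_eq x y }⟩

theorem apply_add_add_of_mem_orthogonal (hrefl : B₁.IsRefl) {W : Submodule R M₁} {x y u v : M₁}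
    (hx : x ∈ W) (hy : y ∈ W) (hu : u ∈ B₁.orthogonal W) (hv : v ∈ B₁.orthogonal W) :
    B₁ (x + u) (y + v) = B₁ x y + B₁ u v := by
  have hxv : B₁ x v = 0 := hv x hx
  have huy : B₁ u y = 0 := hrefl _ _ (hu y hy)
  simp [hxv, huy]

theorem nondegenerate_compLeft (hnd : B₁.Nondegenerate) (A : M₁ ≃ₗ[R] M₁) :
    (B₁.compLeft A.toLinearMap).Nondegenerate := by
  constructor
  · exact fun x hx => A.map_eq_zero_iff.1 (hnd.1 (A x) hx)
  · exact fun y hy => hnd.2 y (A.surjective.forall.2 hy)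

/-- The matrix `B (v i) (v j)` of a bilinear form on a family `v`, which need not be a basis, unlike
in `LinearMap.BilinForm.toMatrix`. -/
def gramMatrix {ι : Type*} (B : LinearMap.BilinForm R M₁) (v : ι → M₁) : Matrix ι ι R :=
  Matrix.of fun i j => B (v i) (v j)

end CommSemiring

section CommRing

variable {R M M₁ M₂ : Type*} [CommRing R] [AddCommGroup M] [AddCommGroup M₁] [AddCommGroup M₂]
  [Module R M] [Module R M₁] [Module R M₂] {B : LinearMap.BilinForm R M}
  {B₁ : LinearMap.BilinForm R M₁} {B₂ : LinearMap.BilinForm R M₂}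

theorem isAlt_compLeft_of_isSelfAdjoint [NoZeroDivisors R] [NeZero (2 : R)] (halt : B.IsAlt)
    {A : M →ₗ[R] M} (hA : B.IsSelfAdjoint A) : (B.compLeft A).IsAlt := by
  intro x
  have neg_self : -B (A x) x = B (A x) x := (halt.neg_eq (A x) x).trans (hA x x).symm
  have two_mul_self : 2 * B (A x) x = 0 := by linear_combination -neg_self
  exact (mul_eq_zero.1 two_mul_self).resolve_left two_ne_zero

theorem equivalent_of_isCompl_orthogonal (hrefl₁ : B₁.IsRefl) (hrefl₂ : B₂.IsRefl)
    {W₁ : Submodule R M₁} {W₂ : Submodule R M₂}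
    (hW₁ : IsCompl W₁ (B₁.orthogonal W₁)) (hW₂ : IsCompl W₂ (B₂.orthogonal W₂))
    (hW : (B₁.restrict W₁).Equivalent (B₂.restrict W₂))
    (hW' : (B₁.restrict (B₁.orthogonal W₁)).Equivalent (B₂.restrict (B₂.orthogonal W₂))) :
    B₁.Equivalent B₂ := by
  obtain ⟨f⟩ := hW
  obtain ⟨g⟩ := hW'
  let e₁ := Submodule.prodEquivOfIsCompl W₁ _ hW₁
  let e₂ := Submodule.prodEquivOfIsCompl W₂ _ hW₂
  let e := e₁.symm.trans ((f.toLinearEquiv.prodCongr g.toLinearEquiv).trans e₂)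
  refine ⟨{ e with map_app' := fun x y => ?_ }⟩
  obtain ⟨⟨x, x'⟩, rfl⟩ := e₁.surjective x
  obtain ⟨⟨y, y'⟩, rfl⟩ := e₁.surjective y
  have hf : B₂ (f x) (f y) = B₁ x y := f.map_app y x
  have hg : B₂ (g x') (g y') = B₁ x' y' := g.map_app y' x'
  calc B₂ (e (e₁ (x, x'))) (e (e₁ (y, y')))
      = B₂ (f x + g x') (f y + g y') := by simp [e, e₂]
    _ = B₂ (f x) (f y) + B₂ (g x') (g y') :=
        apply_add_add_of_mem_orthogonal hrefl₂ (f x).2 (f y).2 (g x').2 (g y').2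
    _ = B₁ x y + B₁ x' y' := by rw [hf, hg]
    _ = B₁ (x + x') (y + y') :=
        (apply_add_add_of_mem_orthogonal hrefl₁ x.2 y.2 x'.2 y'.2).symm

theorem equivalent_restrict_span_of_gramMatrix_eq {ι : Type*} {v₁ : ι → M₁} {v₂ : ι → M₂}
    (hv₁ : LinearIndependent R v₁) (hv₂ : LinearIndependent R v₂)
    (hv : gramMatrix B₁ v₁ = gramMatrix B₂ v₂) :
    (B₁.restrict (Submodule.span R (Set.range v₁))).Equivalent
      (B₂.restrict (Submodule.span R (Set.range v₂))) := by
  refine equivalent_of_basis (Module.Basis.span hv₁) (Module.Basis.span hv₂) fun i j => ?_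
  simpa [gramMatrix, Module.Basis.span_apply] using congr_fun₂ hv i j

section Gram

variable [IsDomain R] {ι : Type*} [Fintype ι] [DecidableEq ι] {v : ι → M}

theorem linearIndependent_of_det_gramMatrix_ne_zero (hv : (gramMatrix B v).det ≠ 0) :
    LinearIndependent R v := by
  refine Fintype.linearIndependent_iff.2 fun c hc => congr_fun (?_ : c = 0)
  refine Matrix.eq_zero_of_vecMul_eq_zero hv (funext fun j => ?_)
  calc ∑ i, c i * B (v i) (v j) = B (∑ i, c i • v i) (v j) := by simp
    _ = 0 := by rw [hc, map_zero, LinearMap.zero_apply]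

theorem nondegenerate_restrict_span_of_det_gramMatrix_ne_zero (hv : (gramMatrix B v).det ≠ 0) :
    (B.restrict (Submodule.span R (Set.range v))).Nondegenerate := by
  let b := Module.Basis.span (linearIndependent_of_det_gramMatrix_ne_zero hv)
  have toMatrix_eq : LinearMap.BilinForm.toMatrix b (B.restrict _) = gramMatrix B v := by
    ext i j
    simp [b, gramMatrix, LinearMap.BilinForm.toMatrix_apply, Module.Basis.span_apply]
  exact LinearMap.BilinForm.nondegenerate_of_det_ne_zero _ b (toMatrix_eq ▸ hv)

end Gram

/-- A hyperbolic pair of an alternating form: vectors `v 0` and `v 1` with `B (v 0) (v 1) = 1`. The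
Gram matrix also records the values that alternation forces, so that it determines the form on the
plane spanned by the pair. -/
def IsHyperbolicPair (B : LinearMap.BilinForm R M) (v : Fin 2 → M) : Prop :=
  gramMatrix B v = !![0, 1; -1, 0]

theorem isHyperbolicPair_of_apply_eq_one (halt : B.IsAlt) {e f : M} (hef : B e f = 1) :
    IsHyperbolicPair B ![e, f] := by
  have hfe : B f e = -1 := by rw [← halt.neg_eq, hef]
  ext i j
  fin_cases i <;> fin_cases j <;> simp [gramMatrix, halt.self_eq_zero, hef, hfe]

namespace IsHyperbolicPair

theorem det_gramMatrix {v : Fin 2 → M} (hv : IsHyperbolicPair B v) : (gramMatrix B v).det = 1 := by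
  rw [hv, Matrix.det_fin_two_of]
  ring

variable [IsDomain R]

theorem linearIndependent {v : Fin 2 → M} (hv : IsHyperbolicPair B v) : LinearIndependent R v :=
  linearIndependent_of_det_gramMatrix_ne_zero (hv.det_gramMatrix ▸ one_ne_zero)

theorem nondegenerate_restrict_span {v : Fin 2 → M} (hv : IsHyperbolicPair B v) :
    (B.restrict (Submodule.span R (Set.range v))).Nondegenerate :=
  nondegenerate_restrict_span_of_det_gramMatrix_ne_zero (hv.det_gramMatrix ▸ one_ne_zero)

theorem finrank_span {v : Fin 2 → M} (hv : IsHyperbolicPair B v) :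
    Module.finrank R (Submodule.span R (Set.range v)) = 2 :=
  finrank_span_eq_card hv.linearIndependent

theorem equivalent_restrict_span {v₁ : Fin 2 → M₁} {v₂ : Fin 2 → M₂}
    (hv₁ : IsHyperbolicPair B₁ v₁) (hv₂ : IsHyperbolicPair B₂ v₂) :
    (B₁.restrict (Submodule.span R (Set.range v₁))).Equivalent
      (B₂.restrict (Submodule.span R (Set.range v₂))) :=
  equivalent_restrict_span_of_gramMatrix_eq hv₁.linearIndependent hv₂.linearIndependent
    (hv₁.trans hv₂.symm)

end IsHyperbolicPair

end CommRing

section Field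

variable {K V V₁ V₂ : Type*} [Field K] [AddCommGroup V] [Module K V] [AddCommGroup V₁] [Module K V₁]
  [AddCommGroup V₂] [Module K V₂] {B : LinearMap.BilinForm K V} {B₁ : LinearMap.BilinForm K V₁}
  {B₂ : LinearMap.BilinForm K V₂}

theorem exists_isHyperbolicPair (halt : B.IsAlt) (hB : B ≠ 0) : ∃ v, IsHyperbolicPair B v := by
  obtain ⟨e, f, hef⟩ : ∃ e f, B e f ≠ 0 := by
    by_contra! h
    exact hB (LinearMap.ext₂ h)
  exact ⟨![e, (B e f)⁻¹ • f], isHyperbolicPair_of_apply_eq_one halt (by simp [hef])⟩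

theorem nondegenerate_restrict_orthogonal [FiniteDimensional K V] (hrefl : B.IsRefl)
    (hnd : B.Nondegenerate) {W : Submodule K V} (hW : Disjoint W (B.orthogonal W)) :
    (B.restrict (B.orthogonal W)).Nondegenerate := by
  refine B.nondegenerate_restrict_of_disjoint_orthogonal hrefl ?_
  rw [LinearMap.BilinForm.orthogonal_orthogonal hnd hrefl]
  exact hW.symm

theorem equivalent_of_isAlt_of_finrank_eq [FiniteDimensional K V₁] [FiniteDimensional K V₂]
    (halt₁ : B₁.IsAlt) (halt₂ : B₂.IsAlt) (hnd₁ : B₁.Nondegenerate) (hnd₂ : B₂.Nondegenerate)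
    (hV : Module.finrank K V₁ = Module.finrank K V₂) : B₁.Equivalent B₂ := by
  induction hn : Module.finrank K V₁ using Nat.strong_induction_on generalizing V₁ V₂ with
  | _ n ih =>
  rcases n.eq_zero_or_pos with rfl | hpos
  · have : Subsingleton V₁ := Module.finrank_zero_iff.1 hn
    have : Subsingleton V₂ := Module.finrank_zero_iff.1 (hV ▸ hn)
    exact equivalent_of_subsingleton
  have : Nontrivial V₁ := Module.nontrivial_of_finrank_pos (hn ▸ hpos)
  have : Nontrivial V₂ := Module.nontrivial_of_finrank_pos (hV ▸ hn ▸ hpos)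
  obtain ⟨v₁, hv₁⟩ := exists_isHyperbolicPair halt₁ hnd₁.ne_zero
  obtain ⟨v₂, hv₂⟩ := exists_isHyperbolicPair halt₂ hnd₂.ne_zero
  have compl₁ := B₁.isCompl_orthogonal_of_restrict_nondegenerate halt₁.isRefl
    hv₁.nondegenerate_restrict_span
  have compl₂ := B₂.isCompl_orthogonal_of_restrict_nondegenerate halt₂.isRefl
    hv₂.nondegenerate_restrict_span
  have finrank₁ := LinearMap.BilinForm.finrank_orthogonal hnd₁ (Submodule.span K (Set.range v₁))
  have finrank₂ := LinearMap.BilinForm.finrank_orthogonal hnd₂ (Submodule.span K (Set.range v₂))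
  rw [hv₁.finrank_span] at finrank₁
  rw [hv₂.finrank_span] at finrank₂
  refine equivalent_of_isCompl_orthogonal halt₁.isRefl halt₂.isRefl compl₁ compl₂
    (hv₁.equivalent_restrict_span hv₂) ?_
  exact ih (n - 2) (by lia) (fun x => halt₁ x) (fun x => halt₂ x)
    (nondegenerate_restrict_orthogonal halt₁.isRefl hnd₁ compl₁.disjoint)
    (nondegenerate_restrict_orthogonal halt₂.isRefl hnd₂ compl₂.disjoint) (by lia) (by lia)

end Field

theorem selfAdjoint_eq_adjoint_mul_general {K V : Type*} [Field K] [NeZero (2 : K)]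
    [AddCommGroup V] [Module K V] [FiniteDimensional K V]
    (h : LinearMap.BilinForm K V) (halt : h.IsAlt) (hnd : h.Nondegenerate)
    (A : V ≃ₗ[K] V) (hsa : ∀ x y, h (A x) y = h x (A y)) :
    ∃ B : V ≃ₗ[K] V, ∀ x y, h (A x) y = h (B x) (B y) := by
  have halt' : (h.compLeft A.toLinearMap).IsAlt := isAlt_compLeft_of_isSelfAdjoint halt hsa
  have hnd' : (h.compLeft A.toLinearMap).Nondegenerate := nondegenerate_compLeft hnd A
  obtain ⟨B⟩ := equivalent_of_isAlt_of_finrank_eq halt' halt hnd' hnd rfl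
  exact ⟨B.toLinearEquiv, fun x y => (B.map_app y x).symm⟩

/-- A self-adjoint automorphism `A` of a finite-dimensional vector space with a
non-degenerate alternating form `h` can be written as `A = B̂ B` for some automorphism `B`:
there is an automorphism `B` with `h (A x) y = h (B x) (B y)` for all `x, y`. -/
theorem selfAdjoint_eq_adjoint_mul {K V : Type*} [Field K] [CharZero K]
    [AddCommGroup V] [Module K V] [FiniteDimensional K V]
    (h : LinearMap.BilinForm K V) (halt : LinearMap.IsAlt h)
    (hnd : LinearMap.BilinForm.Nondegenerate h)
    (A : V ≃ₗ[K] V) (hsa : ∀ x y, h (A x) y = h x (A y)) :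
    ∃ B : V ≃ₗ[K] V, ∀ x y, h (A x) y = h (B x) (B y) :=
  selfAdjoint_eq_adjoint_mul_general h halt hnd A hsa
end

section
/- Let G be a finite group, M a finite-dimensional real representation of G, and W a symplectic representation of G, i.e. a finite-dimensional complex representation of G carrying a non-degenerate G-invariant alternating bilinear form. Then the complex dimension of the space of G-invariants (M ⊗_ℝ W)^G, where G acts diagonally on M ⊗_ℝ W, is even. -/
open scoped TensorProduct

/-- The diagonal `G`-action on `W ⊗[ℝ] M` (W a complex representation, `M` a real
representation) commutes with multiplication by complex scalars (which act via the
`W` factor). -/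
theorem tensorMap_smul_c {G W M : Type*} [Group G]
    [AddCommGroup W] [Module ℂ W] [AddCommGroup M] [Module ℝ M]
    (ρW : Representation ℂ G W) (ρM : Representation ℝ G M)
    (g : G) (c : ℂ) (x : W ⊗[ℝ] M) :
    TensorProduct.map ((ρW g).restrictScalars ℝ) (ρM g) (c • x)
      = c • TensorProduct.map ((ρW g).restrictScalars ℝ) (ρM g) x := by
  induction x using TensorProduct.induction_on with
  | zero => simp
  | tmul w m =>
      rw [TensorProduct.smul_tmul', TensorProduct.map_tmul, TensorProduct.map_tmul,
        TensorProduct.smul_tmul']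
      simp
  | add a b ha hb => rw [smul_add, map_add, ha, hb, map_add, smul_add]

/-- The complex subspace `(W ⊗_ℝ M)^G` of invariants of the diagonal action on
`W ⊗[ℝ] M`, where `W` is a complex representation and `M` a real representation of `G`,
and ℂ acts through the factor `W`. -/
def diagInvariantsC {G W M : Type*} [Group G]
    [AddCommGroup W] [Module ℂ W] [AddCommGroup M] [Module ℝ M]
    (ρW : Representation ℂ G W) (ρM : Representation ℝ G M) :
    Submodule ℂ (W ⊗[ℝ] M) where
  carrier := {x | ∀ g : G, TensorProduct.map ((ρW g).restrictScalars ℝ) (ρM g) x = x}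
  add_mem' := by
    intro a b ha hb g
    rw [map_add, ha g, hb g]
  zero_mem' := by intro g; simp
  smul_mem' := by
    intro c x hx g
    rw [tensorMap_smul_c, hx g]

/-!
Summing the `G`-translates of a positive definite form gives an invariant one on `M`; its tensor
product with the symplectic form of `W` is a nondegenerate invariant alternating form on `W ⊗ M`.
A vector fixed by `G` pairs with `y` as it does, up to the factor `|G|`, with the sum of the
`G`-translates of `y`, so a fixed vector orthogonal to all fixed vectors is orthogonal to
everything. Hence the form stays nondegenerate on the invariants, and a space with a nondegenerate
alternating form has even dimension.
-/

/-- A bilinear form `B` is invariant under the representation `ρ` if every `ρ g` preserves it. -/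
def IsInvariantForm {R G V : Type*} [CommRing R] [Group G] [AddCommGroup V] [Module R V]
    (ρ : Representation R G V) (B : LinearMap.BilinForm R V) : Prop :=
  ∀ (g : G) (x y : V), B (ρ g x) (ρ g y) = B x y

theorem even_card_of_transpose_eq_neg {R n : Type*} [CommRing R] [NoZeroDivisors R] [NeZero (2 : R)]
    [Fintype n] [DecidableEq n] {A : Matrix n n R} (hA : A.transpose = -A) (hdet : A.det ≠ 0) :
    Even (Fintype.card n) := by
  by_contra hodd
  have hneg : A.det = -A.det := by
    calc A.det = (-A).det := by rw [← hA, Matrix.det_transpose]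
      _ = -A.det := by
        rw [Matrix.det_neg, (Nat.not_even_iff_odd.mp hodd).neg_one_pow, neg_one_mul]
  have htwo : 2 * A.det = 0 := by linear_combination hneg
  exact hdet ((mul_eq_zero.mp htwo).resolve_left two_ne_zero)

theorem even_finrank_of_isAlt_of_separatingLeft {R V : Type*} [CommRing R] [IsDomain R]
    [NeZero (2 : R)] [AddCommGroup V] [Module R V] [Module.Free R V] [Module.Finite R V]
    {B : LinearMap.BilinForm R V} (hB : B.IsAlt) (hsep : B.SeparatingLeft) :
    Even (Module.finrank R V) := by
  let e := Module.finBasis R V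
  have hskew : (LinearMap.BilinForm.toMatrix e B).transpose =
      -LinearMap.BilinForm.toMatrix e B := by
    ext i j
    simp only [Matrix.transpose_apply, Matrix.neg_apply, LinearMap.BilinForm.toMatrix_apply,
      hB.neg_eq]
  have hnondeg : B.Nondegenerate :=
    (LinearMap.IsRefl.nondegenerate_iff_separatingLeft hB.isRefl).mpr hsep
  simpa only [Fintype.card_fin] using even_card_of_transpose_eq_neg hskew
    ((LinearMap.BilinForm.nondegenerate_iff_det_ne_zero e).mp hnondeg)

section Invariants

variable {R G V : Type*} [CommRing R] [Group G] [AddCommGroup V] [Module R V]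
  {ρ : Representation R G V} {B : LinearMap.BilinForm R V}

theorem IsInvariantForm.apply_norm [Fintype G] (hB : IsInvariantForm ρ B) {x : V}
    (hx : x ∈ ρ.invariants) (y : V) : B x (ρ.norm y) = Fintype.card G * B x y := by
  have hterm (g : G) : B x (ρ g y) = B x y := by
    rw [← hB g x y, hx g]
  simp only [Representation.norm, LinearMap.sum_apply, map_sum, hterm, Finset.sum_const,
    Finset.card_univ, nsmul_eq_mul]

theorem IsInvariantForm.separatingLeft_restrict_invariants [Finite G] [NoZeroDivisors R]
    [NeZero (Nat.card G : R)] (hB : IsInvariantForm ρ B) (hsep : B.SeparatingLeft) :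
    (B.restrict ρ.invariants).SeparatingLeft := by
  have := Fintype.ofFinite G
  rintro ⟨x, hx⟩ hxB
  refine Subtype.ext (hsep x fun y ↦ ?_)
  have hnorm : B x (ρ.norm y) = 0 := hxB ⟨ρ.norm y, fun g ↦ ρ.self_norm_apply g y⟩
  rw [hB.apply_norm hx, ← Nat.card_eq_fintype_card] at hnorm
  exact (mul_eq_zero.mp hnorm).resolve_left (NeZero.ne _)

theorem IsInvariantForm.even_finrank_invariants [IsDomain R] [NeZero (2 : R)] [Finite G]
    [NeZero (Nat.card G : R)] [Module.Free R ρ.invariants] [Module.Finite R ρ.invariants]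
    (hB : IsInvariantForm ρ B) (halt : B.IsAlt) (hsep : B.SeparatingLeft) :
    Even (Module.finrank R ρ.invariants) :=
  even_finrank_of_isAlt_of_separatingLeft (B := B.restrict ρ.invariants) (fun x ↦ halt x)
    (hB.separatingLeft_restrict_invariants hsep)

end Invariants

theorem separatingLeft_of_posDef {k M : Type*} [CommRing k] [Preorder k] [AddCommGroup M]
    [Module k M] {b : LinearMap.BilinForm k M} (hb : ∀ x ≠ 0, 0 < b x x) : b.SeparatingLeft := by
  intro x hx
  by_contra hne
  exact (hb x hne).ne' (hx x)

section PositiveDefinite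

variable {k G M : Type*} [CommRing k] [LinearOrder k] [IsStrictOrderedRing k]
  [AddCommGroup M] [Module k M]

theorem exists_isSymm_posDef [Module.Free k M] :
    ∃ b : LinearMap.BilinForm k M, b.IsSymm ∧ ∀ x ≠ 0, 0 < b x x := by
  classical
  let e := Module.Free.chooseBasis k M
  have hsymm : e.toDual = e.toDual.flip :=
    e.ext fun i ↦ e.ext fun j ↦ by simp only [LinearMap.flip_apply, e.toDual_apply, eq_comm]
  have hsum (x : M) : e.toDual x x = ∑ i ∈ (e.repr x).support, e.repr x i * e.repr x i := by
    conv_lhs => arg 2; rw [← e.linearCombination_repr x]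
    simp only [Finsupp.linearCombination_apply, Finsupp.sum, map_sum, map_smul, smul_eq_mul,
      e.toDual_apply_left]
  refine ⟨e.toDual, ⟨LinearMap.congr_fun₂ hsymm⟩, fun x hx ↦ ?_⟩
  rw [hsum]
  refine Finset.sum_pos (fun i hi ↦ mul_self_pos.mpr (Finsupp.mem_support_iff.mp hi)) ?_
  rwa [Finsupp.support_nonempty_iff, ne_eq, e.repr.map_eq_zero_iff]

theorem exists_isInvariantForm_isSymm_posDef [Module.Free k M] [Group G] [Finite G]
    (ρ : Representation k G M) :
    ∃ b : LinearMap.BilinForm k M, IsInvariantForm ρ b ∧ b.IsSymm ∧ ∀ x ≠ 0, 0 < b x x := by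
  have := Fintype.ofFinite G
  obtain ⟨b₀, hsymm, hpos⟩ := exists_isSymm_posDef (k := k) (M := M)
  let b : LinearMap.BilinForm k M := ∑ g, b₀.comp (ρ g) (ρ g)
  have hb (x y : M) : b x y = ∑ g, b₀ (ρ g x) (ρ g y) := by
    simp only [b, LinearMap.sum_apply, LinearMap.BilinForm.comp_apply]
  refine ⟨b, fun h x y ↦ ?_, ⟨fun x y ↦ ?_⟩, fun x hx ↦ ?_⟩
  · simp only [hb, ← Module.End.mul_apply, ← map_mul]
    exact (Group.mulRight_bijective h).sum_comp fun g ↦ b₀ (ρ g x) (ρ g y)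
  · simp only [hb, hsymm.eq (ρ _ x)]
  · rw [hb]
    refine Finset.sum_pos (fun g _ ↦ hpos _ ?_) Finset.univ_nonempty
    rwa [ne_eq, (ρ.apply_bijective g).injective.eq_iff' (map_zero _)]

end PositiveDefinite

section TensorProduct

variable {k K G W M : Type*} [CommRing k] [CommRing K] [Algebra k K] [Group G]
  [AddCommGroup W] [Module k W] [Module K W] [IsScalarTower k K W] [AddCommGroup M] [Module k M]

theorem isAlt_tmul {κ : LinearMap.BilinForm K W} {b : LinearMap.BilinForm k M} (hκ : κ.IsAlt)
    (hb : b.IsSymm) : (LinearMap.BilinForm.tmul κ b).IsAlt := by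
  set B := LinearMap.BilinForm.tmul κ b with hB
  have hskew : B = -B.flip := by
    ext w m w' m'
    simp [hB, hb.eq, ← hκ.neg_eq w' w]
  intro x
  induction x using TensorProduct.induction_on with
  | zero => exact map_zero _
  | tmul w m => rw [hB, LinearMap.BilinForm.tensorDistrib_tmul, hκ, smul_zero]
  | add x y hx hy =>
    have hxy : B x y = -B y x := LinearMap.congr_fun₂ hskew x y
    simp only [map_add, LinearMap.add_apply, hx, hy, hxy, zero_add, add_zero, add_neg_cancel]

/-- The diagonal representation of `G` on `W ⊗[k] M`, linear over the larger ring `K` through the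
factor `W`. -/
noncomputable def tensorRep (ρW : Representation K G W) (ρM : Representation k G M) :
    Representation K G (W ⊗[k] M) where
  toFun g := TensorProduct.AlgebraTensorModule.map (ρW g) (ρM g)
  map_one' := by simp [Module.End.one_eq_id]
  map_mul' g h := by
    simp [Module.End.mul_eq_comp, TensorProduct.AlgebraTensorModule.map_comp]

theorem isInvariantForm_tmul {ρW : Representation K G W} {ρM : Representation k G M}
    {κ : LinearMap.BilinForm K W} {b : LinearMap.BilinForm k M} (hκ : IsInvariantForm ρW κ)
    (hb : IsInvariantForm ρM b) :
    IsInvariantForm (tensorRep ρW ρM) (LinearMap.BilinForm.tmul κ b) := by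
  set B := LinearMap.BilinForm.tmul κ b with hB
  intro g
  have hcomp : LinearMap.BilinForm.comp B (tensorRep ρW ρM g) (tensorRep ρW ρM g) = B := by
    ext w m w' m'
    simp [hB, tensorRep, hκ g, hb g]
  exact LinearMap.congr_fun₂ hcomp

variable (W) in
/-- The contraction `w ⊗ₜ m ↦ b m m' • w` of `W ⊗[k] M` against `m'`. Through it a tensor can be
tested one factor at a time, which needs no finiteness of `W` or `M`. -/
noncomputable def contractSnd (b : LinearMap.BilinForm k M) (m' : M) : W ⊗[k] M →ₗ[k] W :=
  (TensorProduct.rid k W).toLinearMap ∘ₗ (b.flip m').lTensor W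

theorem repr_contractSnd {ι : Type*} [DecidableEq ι] (e : Module.Basis ι k W)
    (b : LinearMap.BilinForm k M) (m' : M) (x : W ⊗[k] M) (i : ι) :
    e.repr (contractSnd W b m' x) i = b (TensorProduct.equivFinsuppOfBasisLeft e x i) m' := by
  induction x using TensorProduct.induction_on with
  | zero => simp
  | tmul w m => simp [contractSnd, mul_comm]
  | add x y hx hy => simp [hx, hy]

theorem apply_contractSnd (κ : LinearMap.BilinForm K W) (b : LinearMap.BilinForm k M)
    (x : W ⊗[k] M) (w' : W) (m' : M) :
    κ (contractSnd W b m' x) w' = LinearMap.BilinForm.tmul κ b x (w' ⊗ₜ m') := by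
  induction x using TensorProduct.induction_on with
  | zero => simp
  | tmul w m => simp [contractSnd]
  | add x y hx hy => simp only [map_add, LinearMap.add_apply, hx, hy]

theorem separatingLeft_tmul [Module.Free k W] {κ : LinearMap.BilinForm K W}
    {b : LinearMap.BilinForm k M} (hκ : κ.SeparatingLeft) (hb : b.SeparatingLeft) :
    (LinearMap.BilinForm.tmul κ b).SeparatingLeft := by
  classical
  intro x hx
  let e := Module.Free.chooseBasis k W
  have hcontract (m' : M) : contractSnd W b m' x = 0 :=
    hκ _ fun w' ↦ by rw [apply_contractSnd, hx]
  refine (TensorProduct.equivFinsuppOfBasisLeft e).map_eq_zero_iff.mp (Finsupp.ext fun i ↦ ?_)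
  refine hb _ fun m' ↦ ?_
  rw [← repr_contractSnd, hcontract, map_zero, Finsupp.zero_apply]

instance finite_tensorProduct_left [Module.Finite K W] [Module.Finite k M] :
    Module.Finite K (W ⊗[k] M) :=
  Module.Finite.equiv (TensorProduct.AlgebraTensorModule.cancelBaseChange k K K W M)

end TensorProduct

theorem diagInvariantsC_eq_invariants_tensorRep {G W M : Type*} [Group G]
    [AddCommGroup W] [Module ℂ W] [AddCommGroup M] [Module ℝ M]
    (ρW : Representation ℂ G W) (ρM : Representation ℝ G M) :
    diagInvariantsC ρW ρM = (tensorRep ρW ρM).invariants :=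
  rfl

theorem even_finrank_invariants_of_symplectic_general {k K G W M : Type*} [Field k] [LinearOrder k]
    [IsStrictOrderedRing k] [Field K] [Algebra k K] [Group G] [Finite G]
    [AddCommGroup W] [Module k W] [Module K W] [IsScalarTower k K W] [AddCommGroup M] [Module k M]
    (ρW : Representation K G W) (ρM : Representation k G M)
    [FiniteDimensional K (tensorRep ρW ρM).invariants]
    (κ : LinearMap.BilinForm K W) (hκalt : κ.IsAlt) (hκsep : κ.SeparatingLeft)
    (hκinv : IsInvariantForm ρW κ) :
    Even (Module.finrank K (tensorRep ρW ρM).invariants) := by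
  have : CharZero K := charZero_of_injective_algebraMap (algebraMap k K).injective
  obtain ⟨b, hbinv, hbsymm, hbpos⟩ := exists_isInvariantForm_isSymm_posDef ρM
  exact (isInvariantForm_tmul hκinv hbinv).even_finrank_invariants (isAlt_tmul hκalt hbsymm)
    (separatingLeft_tmul hκsep (separatingLeft_of_posDef hbpos))

/-- If `M` is a finite-dimensional real representation of a finite group `G` and `W` is a
symplectic complex representation of `G` (i.e. it carries a non-degenerate `G`-invariant
alternating bilinear form), then the complex dimension of `(M ⊗_ℝ W)^G` is even. -/
theorem even_finrank_invariants_of_symplectic {G W M : Type*} [Group G] [Fintype G]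
    [AddCommGroup W] [Module ℂ W] [FiniteDimensional ℂ W]
    [AddCommGroup M] [Module ℝ M] [FiniteDimensional ℝ M]
    (ρW : Representation ℂ G W) (ρM : Representation ℝ G M)
    (κ : LinearMap.BilinForm ℂ W) (hκalt : LinearMap.IsAlt κ)
    (hκnd : LinearMap.BilinForm.Nondegenerate κ)
    (hκinv : ∀ (g : G) (x y : W), κ (ρW g x) (ρW g y) = κ x y) :
    Even (Module.finrank ℂ (diagInvariantsC ρW ρM)) := by
  rw [diagInvariantsC_eq_invariants_tensorRep]
  exact even_finrank_invariants_of_symplectic_general ρW ρM κ hκalt hκnd.1 hκinv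
end

section
/- Let G be a finite group, U a free ℝ[G]-module with a G-invariant real-valued symmetric bilinear form σ, and W a finite-dimensional complex representation of G with a G-invariant alternating bilinear form κ. Let σ ⊗ κ be the form on U ⊗_ℝ W determined by (σ⊗κ)(u⊗w, u'⊗w') = σ(u,u')κ(w,w'), let r_G(u⊗w) = ∑_{g∈G} gu ⊗ gw, and let σ̃(u,u') = ∑_{g∈G} σ(gu,u') g^{-1} ∈ ℝ[G]. Then for all u, u' ∈ U and w, w' ∈ W: (σ⊗κ)(r_G(u⊗w), r_G(u'⊗w')) = |G| · κ(w, σ̃(u,u')·w'), where σ̃(u,u') acts on w' through the ℂ[G]-module structure of W. -/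
open scoped TensorProduct

/-!
On the diagonal representation on `W ⊗ U` the averaging map `r_G` is the norm `N = ∑ g, g`. Since
`g N = N`, every invariant form satisfies `B (N x) (N y) = |G| B x (N y)`, so only one of the two
sums over `G` survives; moving `g` across `σ` by invariance then turns the remaining one into the
group-ring-valued form.
-/

section InvariantPairing

variable {k G V V' P : Type*} [CommSemiring k] [Group G]
  [AddCommMonoid V] [Module k V] [AddCommMonoid V'] [Module k V'] [AddCommMonoid P] [Module k P]
  {ρ : Representation k G V} {ρ' : Representation k G V'} {B : V →ₗ[k] V' →ₗ[k] P}

variable (ρ) in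
theorem norm_apply_eq_sum [Fintype G] (x : V) : ρ.norm x = ∑ g : G, ρ g x := by
  rw [Representation.norm, LinearMap.sum_apply]

theorem apply_inv_right_of_invariant (hB : ∀ g x y, B (ρ g x) (ρ' g y) = B x y)
    (g : G) (x : V) (y : V') : B x (ρ' g⁻¹ y) = B (ρ g x) y := by
  rw [← hB g x, Representation.self_inv_apply]

theorem apply_norm_norm_of_invariant [Fintype G] (hB : ∀ g x y, B (ρ g x) (ρ' g y) = B x y)
    (x : V) (y : V') : B (ρ.norm x) (ρ'.norm y) = Fintype.card G • B x (ρ'.norm y) := by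
  have apply_norm_right (g : G) : B (ρ g x) (ρ'.norm y) = B x (ρ'.norm y) := by
    rw [← hB g x, Representation.self_norm_apply]
  calc B (ρ.norm x) (ρ'.norm y)
      = ∑ g : G, B (ρ g x) (ρ'.norm y) := by
        rw [norm_apply_eq_sum ρ, map_sum, LinearMap.sum_apply]
    _ = Fintype.card G • B x (ρ'.norm y) := by
        simp only [apply_norm_right, Finset.sum_const, Finset.card_univ]

end InvariantPairing

section Tensor

variable {R A G W U : Type*} [CommSemiring R] [CommSemiring A] [Algebra R A]
  [AddCommMonoid W] [Module R W] [Module A W] [IsScalarTower R A W]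
  [AddCommMonoid U] [Module R U]

/-- The diagonal action of `G` on `W ⊗[R] U`, as a representation over the `R`-algebra `A` acting
on the left factor; the case `A = R` is `Representation.tprod`. -/
noncomputable def heterobasicTprod [Monoid G] (ρW : Representation A G W)
    (ρU : Representation R G U) : Representation A G (W ⊗[R] U) where
  toFun g := TensorProduct.AlgebraTensorModule.map (ρW g) (ρU g)
  map_one' := by simp only [map_one, TensorProduct.AlgebraTensorModule.map_one]
  map_mul' g h := by simp only [map_mul, TensorProduct.AlgebraTensorModule.map_mul]

/-- The group-ring-valued form `σ̃(u, u') = ∑ g, σ(g u, u') g⁻¹` attached to a bilinear form `σ` on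
a representation of a finite group. -/
noncomputable def groupRingForm [Group G] [Fintype G] (ρ : Representation R G U)
    (σ : LinearMap.BilinForm R U) (u u' : U) : MonoidAlgebra R G :=
  ∑ g : G, MonoidAlgebra.single g⁻¹ (σ (ρ g u) u')

theorem heterobasicTprod_apply_tmul [Monoid G] (ρW : Representation A G W)
    (ρU : Representation R G U) (g : G) (w : W) (u : U) :
    heterobasicTprod ρW ρU g (w ⊗ₜ[R] u) = ρW g w ⊗ₜ[R] ρU g u :=
  rfl

theorem tmul_heterobasicTprod_invariant [Monoid G] {ρW : Representation A G W}
    {ρU : Representation R G U} {κ : LinearMap.BilinForm A W} {σ : LinearMap.BilinForm R U}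
    (hκ : ∀ g x y, κ (ρW g x) (ρW g y) = κ x y) (hσ : ∀ g x y, σ (ρU g x) (ρU g y) = σ x y)
    (g : G) (x y : W ⊗[R] U) :
    LinearMap.BilinForm.tmul κ σ (heterobasicTprod ρW ρU g x) (heterobasicTprod ρW ρU g y) =
      LinearMap.BilinForm.tmul κ σ x y := by
  induction x with
  | zero => simp only [map_zero, LinearMap.zero_apply]
  | add x₁ x₂ h₁ h₂ => simp only [map_add, LinearMap.add_apply, h₁, h₂]
  | tmul w u =>
    induction y with
    | zero => simp only [map_zero]
    | add y₁ y₂ h₁ h₂ => simp only [map_add, h₁, h₂]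
    | tmul w' u' =>
      simp only [heterobasicTprod_apply_tmul, LinearMap.BilinForm.tensorDistrib_tmul, hκ, hσ]

variable [Group G] [Fintype G] {ρW : Representation A G W} {ρU : Representation R G U}
  {κ : LinearMap.BilinForm A W} {σ : LinearMap.BilinForm R U}

variable (ρW ρU σ) in
theorem lift_groupRingForm_apply (u u' : U) (w : W) :
    MonoidAlgebra.lift R (Module.End A W) G ρW (groupRingForm ρU σ u u') w =
      ∑ g : G, σ (ρU g u) u' • ρW g⁻¹ w := by
  simp only [groupRingForm, map_sum, MonoidAlgebra.lift_single, LinearMap.sum_apply,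
    LinearMap.smul_apply]

theorem tmul_apply_norm_heterobasicTprod (hσ : ∀ g x y, σ (ρU g x) (ρU g y) = σ x y)
    (w w' : W) (u u' : U) :
    LinearMap.BilinForm.tmul κ σ (w ⊗ₜ[R] u) ((heterobasicTprod ρW ρU).norm (w' ⊗ₜ[R] u')) =
      κ w (MonoidAlgebra.lift R (Module.End A W) G ρW (groupRingForm ρU σ u u') w') :=
  calc
    _ = ∑ g : G, σ u (ρU g u') • κ w (ρW g w') := by
      simp only [norm_apply_eq_sum, map_sum, heterobasicTprod_apply_tmul,
        LinearMap.BilinForm.tensorDistrib_tmul]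
    _ = ∑ g : G, σ u (ρU g⁻¹ u') • κ w (ρW g⁻¹ w') :=
      (Equiv.sum_comp (Equiv.inv G) _).symm
    _ = ∑ g : G, σ (ρU g u) u' • κ w (ρW g⁻¹ w') := by
      simp only [apply_inv_right_of_invariant hσ]
    _ = _ := by
      simp only [lift_groupRingForm_apply, map_sum, LinearMap.map_smul_of_tower]

theorem form_on_averages_general (hκ : ∀ g x y, κ (ρW g x) (ρW g y) = κ x y)
    (hσ : ∀ g x y, σ (ρU g x) (ρU g y) = σ x y) (u u' : U) (w w' : W) :
    LinearMap.BilinForm.tmul κ σ ((heterobasicTprod ρW ρU).norm (w ⊗ₜ[R] u))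
        ((heterobasicTprod ρW ρU).norm (w' ⊗ₜ[R] u')) =
      Fintype.card G *
        κ w (MonoidAlgebra.lift R (Module.End A W) G ρW (groupRingForm ρU σ u u') w') := by
  rw [apply_norm_norm_of_invariant (tmul_heterobasicTprod_invariant hκ hσ),
    tmul_apply_norm_heterobasicTprod hσ, nsmul_eq_mul]

end Tensor

/-- Let `G` be a finite group, `U` a free `ℝ[G]`-module with a non-degenerate `G`-invariant
real-valued symmetric bilinear form `σ`, and `W` a complex representation of `G` with a
`G`-invariant alternating bilinear form `κ`.  Then, for the averaging map
`r_G(w ⊗ u) = ∑_g (g w) ⊗ (g u)` and the group-ring valued form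
`σ̃(u,u') = ∑_g σ(gu,u') g⁻¹`, one has
`(σ ⊗ κ)(r_G(u ⊗ w), r_G(u' ⊗ w')) = |G| ⬝ κ(w, σ̃(u,u')·w')`. -/
theorem form_on_averages {G U W : Type*} [Group G] [Fintype G]
    [AddCommGroup U] [Module ℝ U] [AddCommGroup W] [Module ℂ W] [FiniteDimensional ℂ W]
    (ρU : Representation ℝ G U) (ρW : Representation ℂ G W)
    (hUfree : ∃ (q : ℕ) (u₀ : Fin q → U),
      LinearIndependent ℝ (fun p : Fin q × G => ρU p.2 (u₀ p.1)) ∧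
      Submodule.span ℝ (Set.range fun p : Fin q × G => ρU p.2 (u₀ p.1)) = ⊤)
    (σ : LinearMap.BilinForm ℝ U)
    (hσsymm : ∀ x y, σ x y = σ y x)
    (hσnd : LinearMap.BilinForm.Nondegenerate σ)
    (hσinv : ∀ (g : G) (x y : U), σ (ρU g x) (ρU g y) = σ x y)
    (κ : LinearMap.BilinForm ℂ W) (hκalt : LinearMap.IsAlt κ)
    (hκinv : ∀ (g : G) (x y : W), κ (ρW g x) (ρW g y) = κ x y)
    (rG : W ⊗[ℝ] U → W ⊗[ℝ] U)
    (hrG : ∀ x, rG x = ∑ g : G,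
      TensorProduct.map ((ρW g).restrictScalars ℝ) (ρU g) x) :
    ∀ (u u' : U) (w w' : W),
      LinearMap.BilinForm.tmul κ σ (rG (w ⊗ₜ[ℝ] u)) (rG (w' ⊗ₜ[ℝ] u'))
        = (Fintype.card G : ℂ) *
            κ w (∑ g : G, ((σ (ρU g u) u' : ℝ) : ℂ) • ρW g⁻¹ w') := by
  obtain rfl : rG = (heterobasicTprod ρW ρU).norm :=
    funext fun x => (hrG x).trans (norm_apply_eq_sum (heterobasicTprod ρW ρU) x).symm
  simpa only [lift_groupRingForm_apply, Complex.coe_smul] using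
    form_on_averages_general hκinv hσinv
end

section
/- Let G be a finite group, M a finite-dimensional real representation of G, and σ a non-degenerate G-invariant symmetric bilinear form on M. Then there exist G-invariant subspaces M^+ and M^- of M such that M = M^+ ⊕ M^-, σ is positive definite on M^+, and σ is negative definite on M^-. -/
/-!
Summing over the group makes some inner product on `M` invariant. With respect to it, `σ` is
represented by a self-adjoint operator `T`, that is, `⟪T x, y⟫ = σ x y`; this operator commutes with
the group because both forms are invariant, and it is injective because `σ` is nondegenerate. The
sums of its eigenspaces for positive and for negative eigenvalues are the required subspaces.
-/

open Module End

section SpectralSubspace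

variable {R V : Type*} [CommRing R] [AddCommGroup V] [Module R V] {T f : End R V} {s t : Set R}

/-- The sum of the eigenspaces of `T` over the eigenvalues lying in `s`. For a diagonalizable `T`
this is the image of the spectral projection of `T` attached to `s`. -/
def spectralSubspace (T : End R V) (s : Set R) : Submodule R V :=
  ⨆ μ ∈ s, T.eigenspace μ

theorem eigenspace_le_spectralSubspace {μ : R} (hμ : μ ∈ s) :
    T.eigenspace μ ≤ spectralSubspace T s :=
  le_iSup₂_of_le μ hμ le_rfl

theorem mapsTo_spectralSubspace_of_commute (hTf : Commute T f) (s : Set R) :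
    Set.MapsTo f (spectralSubspace T s) (spectralSubspace T s) := by
  change spectralSubspace T s ≤ (spectralSubspace T s).comap f
  exact iSup₂_le fun μ hμ x hx ↦
    eigenspace_le_spectralSubspace hμ (mapsTo_genEigenspace_of_comm hTf μ 1 hx)

theorem disjoint_spectralSubspace [IsDomain R] [IsTorsionFree R V] (hst : Disjoint s t) :
    Disjoint (spectralSubspace T s) (spectralSubspace T t) :=
  T.eigenspaces_iSupIndep.disjoint_biSup_biSup hst

theorem spectralSubspace_sup_spectralSubspace_eq_iSup_eigenspace
    (hst : ∀ μ, T.HasEigenvalue μ → μ ∈ s ∪ t) :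
    spectralSubspace T s ⊔ spectralSubspace T t = ⨆ μ, T.eigenspace μ := by
  refine le_antisymm (sup_le (iSup₂_le_iSup _ _) (iSup₂_le_iSup _ _)) (iSup_le fun μ ↦ ?_)
  by_cases hμ : T.HasEigenvalue μ
  · exact (hst μ hμ).elim (fun hs ↦ le_sup_of_le_left (eigenspace_le_spectralSubspace hs))
      (fun ht ↦ le_sup_of_le_right (eigenspace_le_spectralSubspace ht))
  · exact (not_not.mp hμ).trans_le bot_le

end SpectralSubspace

section InnerProductSpace

variable {𝕜 E : Type*} [RCLike 𝕜] [NormedAddCommGroup E] [InnerProductSpace 𝕜 E]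
  {T f : End 𝕜 E} {s t : Set 𝕜}

theorem isCompl_spectralSubspace [FiniteDimensional 𝕜 E] (hT : T.IsSymmetric)
    (hdisj : Disjoint s t) (hst : ∀ μ, T.HasEigenvalue μ → μ ∈ s ∪ t) :
    IsCompl (spectralSubspace T s) (spectralSubspace T t) := by
  refine ⟨disjoint_spectralSubspace hdisj, codisjoint_iff.mpr ?_⟩
  rw [spectralSubspace_sup_spectralSubspace_eq_iSup_eigenspace hst]
  exact Submodule.orthogonal_eq_bot_iff.mp hT.orthogonalComplement_iSup_eigenspaces_eq_bot

-- The quotient is the average of the eigenvalues `μ` with weights `‖v μ‖ ^ 2 / ‖x‖ ^ 2`, where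
-- `x = ∑ μ, v μ` is the orthogonal decomposition of `x` into eigenvectors.
theorem inner_map_div_norm_sq_mem_of_mem_spectralSubspace (hT : T.IsSymmetric) (hs : Convex ℝ s)
    {x : E} (hx : x ∈ spectralSubspace T s) (hx0 : x ≠ 0) :
    inner 𝕜 x (T x) / (‖x‖ : 𝕜) ^ 2 ∈ s := by
  rw [spectralSubspace, iSup_subtype', Submodule.mem_iSup_iff_exists_finsupp] at hx
  obtain ⟨v, hv, hvx⟩ := hx
  have horth := hT.orthogonalFamily_eigenspaces.comp (Subtype.val_injective (p := (· ∈ s)))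
  have hTx : T x = ∑ μ ∈ v.support, (μ : 𝕜) • v μ := by
    rw [← hvx, Finsupp.sum, map_sum]
    exact Finset.sum_congr rfl fun μ _ ↦ mem_eigenspace_iff.mp (hv μ)
  have hnorm : ‖x‖ ^ 2 = ∑ μ ∈ v.support, ‖v μ‖ ^ 2 := by
    rw [← hvx]
    exact horth.norm_sum (fun μ ↦ ⟨v μ, hv μ⟩) v.support
  have hinner : inner 𝕜 x (T x) = ∑ μ ∈ v.support, (μ : 𝕜) * (‖v μ‖ : 𝕜) ^ 2 :=
    calc inner 𝕜 x (T x) = ∑ μ ∈ v.support, inner 𝕜 (v μ) ((μ : 𝕜) • v μ) := by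
          rw [hTx, ← hvx]
          exact horth.inner_sum (fun μ ↦ ⟨v μ, hv μ⟩)
            (fun μ ↦ ⟨(μ : 𝕜) • v μ, Submodule.smul_mem _ _ (hv μ)⟩) v.support
      _ = ∑ μ ∈ v.support, (μ : 𝕜) * (‖v μ‖ : 𝕜) ^ 2 := by
          simp only [inner_smul_right, inner_self_eq_norm_sq_to_K]
  have hquot : inner 𝕜 x (T x) / (‖x‖ : 𝕜) ^ 2 =
      ∑ μ ∈ v.support, (‖v μ‖ ^ 2 / ‖x‖ ^ 2) • (μ : 𝕜) := by
    rw [hinner, Finset.sum_div]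
    refine Finset.sum_congr rfl fun μ _ ↦ ?_
    rw [RCLike.real_smul_eq_coe_mul]
    push_cast
    ring
  rw [hquot]
  refine hs.sum_mem (fun μ _ ↦ by positivity) ?_ fun μ _ ↦ μ.2
  rw [← Finset.sum_div, ← hnorm, div_self (by positivity)]

theorem commute_of_inner_map_map (hf : Function.Surjective f)
    (hfinner : ∀ x y, inner 𝕜 (f x) (f y) = inner 𝕜 x y)
    (hTf : ∀ x y, inner 𝕜 (T (f x)) (f y) = inner 𝕜 (T x) y) : Commute T f := by
  refine LinearMap.ext fun x ↦ ext_inner_right 𝕜 <| hf.forall.mpr fun y ↦ ?_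
  rw [mul_apply, mul_apply, hTf, hfinner]

end InnerProductSpace

section RealInnerProductSpace

variable {E : Type*} [NormedAddCommGroup E] [InnerProductSpace ℝ E] {T : End ℝ E}

theorem isCompl_spectralSubspace_Ioi_Iio [FiniteDimensional ℝ E] (hT : T.IsSymmetric)
    (hinj : Function.Injective T) :
    IsCompl (spectralSubspace T (Set.Ioi 0)) (spectralSubspace T (Set.Iio 0)) := by
  refine isCompl_spectralSubspace hT Set.Ioi_disjoint_Iio_same fun μ hμ ↦ ?_
  obtain ⟨x, hx⟩ := hμ.exists_hasEigenvector
  have hμ0 : μ ≠ 0 := by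
    rintro rfl
    exact hx.2 (hinj (by rw [hx.apply_eq_smul, zero_smul, map_zero]))
  exact hμ0.lt_or_gt.symm

theorem inner_map_self_pos_of_mem_spectralSubspace_Ioi (hT : T.IsSymmetric) {x : E}
    (hx : x ∈ spectralSubspace T (Set.Ioi 0)) (hx0 : x ≠ 0) : 0 < inner ℝ (T x) x := by
  have hquot : 0 < inner ℝ x (T x) / ‖x‖ ^ 2 :=
    inner_map_div_norm_sq_mem_of_mem_spectralSubspace hT (convex_Ioi 0) hx hx0
  rwa [lt_div_iff₀ (by positivity), zero_mul, ← hT] at hquot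

theorem inner_map_self_neg_of_mem_spectralSubspace_Iio (hT : T.IsSymmetric) {x : E}
    (hx : x ∈ spectralSubspace T (Set.Iio 0)) (hx0 : x ≠ 0) : inner ℝ (T x) x < 0 := by
  have hquot : inner ℝ x (T x) / ‖x‖ ^ 2 < 0 :=
    inner_map_div_norm_sq_mem_of_mem_spectralSubspace hT (convex_Iio 0) hx hx0
  rwa [div_lt_iff₀ (by positivity), zero_mul, ← hT] at hquot

theorem exists_isSymmetric_inner_map_eq [FiniteDimensional ℝ E]
    (σ : LinearMap.BilinForm ℝ E) (hσ : ∀ x y, σ x y = σ y x) :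
    ∃ T : End ℝ E, T.IsSymmetric ∧ ∀ x y, inner ℝ (T x) y = σ x y := by
  have hnd : LinearMap.BilinForm.Nondegenerate (innerₗ E) :=
    isSymm_inner.isRefl.nondegenerate_iff_separatingLeft.mpr fun x hx ↦ inner_self_eq_zero.mp (hx x)
  have hT (x y : E) : inner ℝ (σ.symmCompOfNondegenerate (innerₗ E) hnd x) y = σ x y :=
    σ.symmCompOfNondegenerate_left_apply hnd y x
  refine ⟨_, fun x y ↦ ?_, hT⟩
  rw [hT, real_inner_comm, hT, hσ]

end RealInnerProductSpace

section InvariantInnerProduct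

variable {𝕜 G M E : Type*} [RCLike 𝕜] [AddCommGroup M] [Module 𝕜 M]
  [NormedAddCommGroup E] [InnerProductSpace 𝕜 E]

/-- The linear map recording the images under `e` of all translates of a vector. Pulling the `L²`
inner product back along it sums over the group the translates of the pullback along `e`. -/
noncomputable def orbitMap [Monoid G] (ρ : Representation 𝕜 G M) (e : M →ₗ[𝕜] E) :
    M →ₗ[𝕜] PiLp 2 fun _ : G ↦ E :=
  (WithLp.linearEquiv 2 𝕜 (G → E)).symm ∘ₗ LinearMap.pi fun g ↦ e ∘ₗ ρ g

theorem orbitMap_injective [Monoid G] (ρ : Representation 𝕜 G M) {e : M →ₗ[𝕜] E}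
    (he : Function.Injective e) : Function.Injective (orbitMap ρ e) := by
  intro x y hxy
  have h1 : e (ρ 1 x) = e (ρ 1 y) := congrArg (fun v : PiLp 2 fun _ : G ↦ E ↦ v 1) hxy
  simpa only [map_one, one_apply] using he h1

theorem inner_orbitMap [Group G] [Fintype G] (ρ : Representation 𝕜 G M) (e : M →ₗ[𝕜] E)
    (h : G) (x y : M) :
    inner 𝕜 (orbitMap ρ e (ρ h x)) (orbitMap ρ e (ρ h y)) =
      inner 𝕜 (orbitMap ρ e x) (orbitMap ρ e y) := by
  have horbit (g : G) (z : M) : orbitMap ρ e (ρ h z) g = orbitMap ρ e z (g * h) :=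
    congrArg e (by rw [map_mul, mul_apply])
  simp only [PiLp.inner_apply, horbit]
  exact Equiv.sum_comp (Equiv.mulRight h) fun g ↦ inner 𝕜 (orbitMap ρ e x g) (orbitMap ρ e y g)

end InvariantInnerProduct

/-- A finite-dimensional real representation `M` of a finite group `G` with a
non-degenerate `G`-invariant symmetric bilinear form `σ` decomposes as a direct sum of
`G`-invariant subspaces `M = M⁺ ⊕ M⁻` with `σ` positive definite on `M⁺` and negative
definite on `M⁻`. -/
theorem exists_invariant_signature_decomposition {G M : Type*} [Group G] [Finite G]
    [AddCommGroup M] [Module ℝ M] [FiniteDimensional ℝ M]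
    (ρ : Representation ℝ G M) (σ : LinearMap.BilinForm ℝ M)
    (hσsymm : ∀ x y, σ x y = σ y x)
    (hσnd : LinearMap.BilinForm.Nondegenerate σ)
    (hσinv : ∀ (g : G) (x y : M), σ (ρ g x) (ρ g y) = σ x y) :
    ∃ P N : Submodule ℝ M,
      (∀ g : G, ∀ x ∈ P, ρ g x ∈ P) ∧
      (∀ g : G, ∀ x ∈ N, ρ g x ∈ N) ∧
      IsCompl P N ∧
      (∀ x ∈ P, x ≠ 0 → 0 < σ x x) ∧
      (∀ x ∈ N, x ≠ 0 → σ x x < 0) := by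
  have := Fintype.ofFinite G
  let e : M ≃ₗ[ℝ] EuclideanSpace ℝ (Fin (finrank ℝ M)) := LinearEquiv.ofFinrankEq _ _ (by simp)
  let F := orbitMap ρ e.toLinearMap
  let : NormedAddCommGroup M := .induced M _ F (orbitMap_injective ρ e.injective)
  let : InnerProductSpace ℝ M := .induced F
  obtain ⟨T, hTsymm, hT⟩ := exists_isSymmetric_inner_map_eq σ hσsymm
  have hcomm (g : G) : Commute T (ρ g) :=
    commute_of_inner_map_map (ρ.apply_bijective g).surjective (inner_orbitMap ρ e.toLinearMap g)
      fun x y ↦ by rw [hT, hT, hσinv]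
  have hTinj : Function.Injective T := (injective_iff_map_eq_zero T).mpr fun x hx ↦
    hσnd.1 x fun y ↦ by rw [← hT, hx, inner_zero_left]
  refine ⟨spectralSubspace T (Set.Ioi 0), spectralSubspace T (Set.Iio 0),
    fun g ↦ mapsTo_spectralSubspace_of_commute (hcomm g) _,
    fun g ↦ mapsTo_spectralSubspace_of_commute (hcomm g) _,
    isCompl_spectralSubspace_Ioi_Iio hTsymm hTinj, fun x hx hx0 ↦ ?_, fun x hx hx0 ↦ ?_⟩
  · exact hT x x ▸ inner_map_self_pos_of_mem_spectralSubspace_Ioi hTsymm hx hx0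
  · exact hT x x ▸ inner_map_self_neg_of_mem_spectralSubspace_Iio hTsymm hx hx0
end

section
/- Let G be a finite group, M a finite-dimensional real representation of G, and σ a non-degenerate G-invariant symmetric bilinear form on M. Suppose M = M_1^+ ⊕ M_1^- and M = M_2^+ ⊕ M_2^- are two decompositions into G-invariant subspaces with σ positive definite on M_1^+ and M_2^+ and negative definite on M_1^- and M_2^-. Then M_1^+ is isomorphic to M_2^+ as a real representation of G, and M_1^- is isomorphic to M_2^- as a real representation of G (i.e., the characters of M^+ and M^- are independent of the choice of decomposition). -/
/-!
The form would be both positive and negative at a nonzero vector of `P₁ ⊓ N₂`, so `P₁ ⊓ N₂ = ⊥` and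
the projection of `M` onto `P₂` along `N₂` is injective on `P₁`. Likewise `P₂` embeds into `P₁`. The
composite is an injective endomorphism of `P₁`, hence surjective by the descending chain condition
(which for vector spaces is finite dimensionality), so both embeddings are bijective. They are
equivariant because the projection along an invariant complement commutes with the action of `G`.
-/

theorem disjoint_of_pos_of_neg {R M α : Type*} [Semiring R] [AddCommMonoid M] [Module R M]
    [Preorder α] [Zero α] (q : M → α) {P N : Submodule R M}
    (hpos : ∀ x ∈ P, x ≠ 0 → 0 < q x) (hneg : ∀ x ∈ N, x ≠ 0 → q x < 0) : Disjoint P N := by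
  refine Submodule.disjoint_def.2 fun x hxP hxN ↦ ?_
  by_contra hx
  exact lt_asymm (hpos x hxP hx) (hneg x hxN hx)

theorem bijective_of_injective_of_injective {R A B : Type*} [Semiring R] [AddCommMonoid A]
    [AddCommMonoid B] [Module R A] [Module R B] [IsArtinian R A] {f : A →ₗ[R] B} {g : B →ₗ[R] A}
    (hf : Function.Injective f) (hg : Function.Injective g) : Function.Bijective f := by
  have hgf : Function.Surjective (g ∘ₗ f) :=
    IsArtinian.surjective_of_injective_endomorphism _ (hg.comp hf)
  refine ⟨hf, fun b ↦ ?_⟩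
  obtain ⟨a, ha⟩ := hgf (g b)
  exact ⟨a, hg ha⟩

section Projection

variable {R M : Type*} [Ring R] [AddCommGroup M] [Module R M]

theorem injective_domRestrict_projectionOnto {P N : Submodule R M} (hc : IsCompl P N)
    {Q : Submodule R M} (hQ : Disjoint Q N) :
    Function.Injective ((P.projectionOnto N hc).domRestrict Q) := by
  rw [LinearMap.injective_domRestrict_iff, Submodule.ker_projectionOnto]
  exact hQ

theorem commute_projection {P N : Submodule R M} (hc : IsCompl P N) {T : Module.End R M}
    (hP : P ∈ Module.End.invtSubmodule T) (hN : N ∈ Module.End.invtSubmodule T) :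
    Commute (P.projection N hc) T := by
  rw [LinearMap.IsIdempotentElem.commute_iff (Submodule.isIdempotentElem_projection hc),
    Submodule.range_projection, Submodule.ker_projection]
  exact ⟨hP, hN⟩

theorem exists_linearEquiv_apply_eq_projection {P₁ N₁ P₂ N₂ : Submodule R M} [IsArtinian R P₁]
    (hc₁ : IsCompl P₁ N₁) (hc₂ : IsCompl P₂ N₂) (h₁₂ : Disjoint P₁ N₂) (h₂₁ : Disjoint P₂ N₁) :
    ∃ e : P₁ ≃ₗ[R] P₂, ∀ x : P₁, (e x : M) = P₂.projection N₂ hc₂ x :=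
  ⟨LinearEquiv.ofBijective _ (bijective_of_injective_of_injective
    (injective_domRestrict_projectionOnto hc₂ h₁₂)
    (injective_domRestrict_projectionOnto hc₁ h₂₁)), fun _ ↦ rfl⟩

end Projection

theorem exists_equivariant_linearEquiv_of_disjoint {R G M : Type*} [CommRing R] [Monoid G]
    [AddCommGroup M] [Module R M] (ρ : Representation R G M) {P₁ N₁ P₂ N₂ : Submodule R M}
    [IsArtinian R P₁] (hP₁ : ∀ g : G, ∀ x ∈ P₁, ρ g x ∈ P₁)
    (hP₂ : ∀ g : G, ∀ x ∈ P₂, ρ g x ∈ P₂) (hN₂ : ∀ g : G, ∀ x ∈ N₂, ρ g x ∈ N₂)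
    (hc₁ : IsCompl P₁ N₁) (hc₂ : IsCompl P₂ N₂) (h₁₂ : Disjoint P₁ N₂) (h₂₁ : Disjoint P₂ N₁) :
    ∃ e : P₁ ≃ₗ[R] P₂, ∀ (g : G) (x : M) (hx : x ∈ P₁),
      (e ⟨ρ g x, hP₁ g x hx⟩ : M) = ρ g (e ⟨x, hx⟩) := by
  obtain ⟨e, he⟩ := exists_linearEquiv_apply_eq_projection hc₁ hc₂ h₁₂ h₂₁
  refine ⟨e, fun g x hx ↦ ?_⟩
  rw [he, he]
  exact LinearMap.congr_fun (commute_projection hc₂ (hP₂ g) (hN₂ g)).eq x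

theorem signature_decomposition_unique_up_to_iso_general {R G M A : Type*} [CommRing R] [Monoid G]
    [AddCommGroup M] [Module R M] [IsArtinian R M] [AddCommMonoid A] [Module R A] [Preorder A]
    (ρ : Representation R G M) (Q : QuadraticMap R M A)
    (P₁ N₁ P₂ N₂ : Submodule R M)
    (hP₁ : ∀ g : G, ∀ x ∈ P₁, ρ g x ∈ P₁) (hN₁ : ∀ g : G, ∀ x ∈ N₁, ρ g x ∈ N₁)
    (hP₂ : ∀ g : G, ∀ x ∈ P₂, ρ g x ∈ P₂) (hN₂ : ∀ g : G, ∀ x ∈ N₂, ρ g x ∈ N₂)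
    (hc₁ : IsCompl P₁ N₁) (hc₂ : IsCompl P₂ N₂)
    (hpos₁ : ∀ x ∈ P₁, x ≠ 0 → 0 < Q x) (hneg₁ : ∀ x ∈ N₁, x ≠ 0 → Q x < 0)
    (hpos₂ : ∀ x ∈ P₂, x ≠ 0 → 0 < Q x) (hneg₂ : ∀ x ∈ N₂, x ≠ 0 → Q x < 0) :
    (∃ e : P₁ ≃ₗ[R] P₂, ∀ (g : G) (x : M) (hx : x ∈ P₁),
        (e ⟨ρ g x, hP₁ g x hx⟩ : M) = ρ g (e ⟨x, hx⟩)) ∧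
    (∃ e : N₁ ≃ₗ[R] N₂, ∀ (g : G) (x : M) (hx : x ∈ N₁),
        (e ⟨ρ g x, hN₁ g x hx⟩ : M) = ρ g (e ⟨x, hx⟩)) := by
  have h₁₂ : Disjoint P₁ N₂ := disjoint_of_pos_of_neg Q hpos₁ hneg₂
  have h₂₁ : Disjoint P₂ N₁ := disjoint_of_pos_of_neg Q hpos₂ hneg₁
  exact ⟨exists_equivariant_linearEquiv_of_disjoint ρ hP₁ hP₂ hN₂ hc₁ hc₂ h₁₂ h₂₁,
    exists_equivariant_linearEquiv_of_disjoint ρ hN₁ hN₂ hP₂ hc₁.symm hc₂.symm h₂₁.symm h₁₂.symm⟩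

/-- For a non-degenerate `G`-invariant symmetric form `σ` on a finite-dimensional real
representation `M` of a finite group `G`, any two decompositions of `M` into a
`G`-invariant positive definite subspace and a `G`-invariant negative definite subspace
have `G`-isomorphic positive parts and `G`-isomorphic negative parts: the characters of
`M⁺` and `M⁻` do not depend on the choice of decomposition. -/
theorem signature_decomposition_unique_up_to_iso {G M : Type*} [Group G] [Finite G]
    [AddCommGroup M] [Module ℝ M] [FiniteDimensional ℝ M]
    (ρ : Representation ℝ G M) (σ : LinearMap.BilinForm ℝ M)
    (hσsymm : ∀ x y, σ x y = σ y x)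
    (hσnd : LinearMap.BilinForm.Nondegenerate σ)
    (hσinv : ∀ (g : G) (x y : M), σ (ρ g x) (ρ g y) = σ x y)
    (P₁ N₁ P₂ N₂ : Submodule ℝ M)
    (hP₁ : ∀ g : G, ∀ x ∈ P₁, ρ g x ∈ P₁) (hN₁ : ∀ g : G, ∀ x ∈ N₁, ρ g x ∈ N₁)
    (hP₂ : ∀ g : G, ∀ x ∈ P₂, ρ g x ∈ P₂) (hN₂ : ∀ g : G, ∀ x ∈ N₂, ρ g x ∈ N₂)
    (hc₁ : IsCompl P₁ N₁) (hc₂ : IsCompl P₂ N₂)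
    (hpos₁ : ∀ x ∈ P₁, x ≠ 0 → 0 < σ x x) (hneg₁ : ∀ x ∈ N₁, x ≠ 0 → σ x x < 0)
    (hpos₂ : ∀ x ∈ P₂, x ≠ 0 → 0 < σ x x) (hneg₂ : ∀ x ∈ N₂, x ≠ 0 → σ x x < 0) :
    (∃ e : P₁ ≃ₗ[ℝ] P₂, ∀ (g : G) (x : M) (hx : x ∈ P₁),
        (e ⟨ρ g x, hP₁ g x hx⟩ : M) = ρ g (e ⟨x, hx⟩)) ∧
    (∃ e : N₁ ≃ₗ[ℝ] N₂, ∀ (g : G) (x : M) (hx : x ∈ N₁),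
        (e ⟨ρ g x, hN₁ g x hx⟩ : M) = ρ g (e ⟨x, hx⟩)) :=
  signature_decomposition_unique_up_to_iso_general ρ σ.toQuadraticMap P₁ N₁ P₂ N₂
    hP₁ hN₁ hP₂ hN₂ hc₁ hc₂ hpos₁ hneg₁ hpos₂ hneg₂
end

section
/- Let G be a finite group and V a finite-dimensional real representation of G. Let Hyp(V) = V ⊕ V^D, where V^D is the dual representation ((g·f)(v) = f(g^{-1}v)), equipped with the symmetric bilinear form h(v⊕f, v'⊕f') = f(v') + f'(v); this form is non-degenerate and G-invariant. Then for any decomposition Hyp(V) = P ⊕ N into G-invariant subspaces with h positive definite on P and negative definite on N, both P and N are isomorphic to V as real representations of G: Hyp(V)^+ ≅ V ≅ Hyp(V)^-. -/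
/-- The hyperbolic symmetric bilinear form on `V ⊕ V^D`:
`h (v ⊕ f) (v' ⊕ f') = f v' + f' v`. -/
def hypForm {K V : Type*} [Field K] [AddCommGroup V] [Module K V] :
    (V × Module.Dual K V) → (V × Module.Dual K V) → K :=
  fun x y => x.2 y.1 + y.2 x.1

/-!
The dual summand `0 ⊕ V^D` is totally isotropic, so a subspace on which `x ↦ h x x` has no
nontrivial zero meets it trivially: the equivariant projection onto `V` embeds such a subspace
into `V`. As `dim Hyp(V) = 2 * dim V`, two such subspaces that span `Hyp(V)` leave no room for
either embedding to be proper.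
-/

section

open Module

theorem bijective_domRestrict_of_codisjoint {K E V : Type*} [DivisionRing K]
    [AddCommGroup E] [Module K E] [AddCommGroup V] [Module K V] [FiniteDimensional K V]
    {P N : Submodule K E} {φ : E →ₗ[K] V}
    (hdim : 2 * finrank K V ≤ finrank K E) (hPN : Codisjoint P N)
    (hP : Function.Injective (φ.domRestrict P)) (hN : Function.Injective (φ.domRestrict N)) :
    Function.Bijective (φ.domRestrict P) := by
  have : FiniteDimensional K P := .of_injective _ hP
  have : FiniteDimensional K N := .of_injective _ hN
  have hP_le : finrank K P ≤ finrank K V := LinearMap.finrank_le_finrank_of_injective hP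
  have hN_le : finrank K N ≤ finrank K V := LinearMap.finrank_le_finrank_of_injective hN
  have hE_le : finrank K E ≤ finrank K P + finrank K N := by
    rw [← finrank_top K E, ← hPN.eq_top]
    exact Submodule.finrank_add_le_finrank_add_finrank P N
  have hP_eq : finrank K P = finrank K V := by lia
  exact ⟨hP, (LinearMap.injective_iff_surjective_of_finrank_eq_finrank hP_eq).mp hP⟩

variable {K V : Type*} [Field K] [AddCommGroup V] [Module K V]

theorem hypForm_eq_zero_of_fst_eq_zero {x y : V × Dual K V} (hx : x.1 = 0) (hy : y.1 = 0) :
    hypForm x y = 0 := by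
  simp [hypForm, hx, hy]

theorem injective_fst_domRestrict_of_hypForm_self_ne_zero {Q : Submodule K (V × Dual K V)}
    (hQ : ∀ x ∈ Q, x ≠ 0 → hypForm x x ≠ 0) :
    Function.Injective ((LinearMap.fst K V (Dual K V)).domRestrict Q) := by
  refine (injective_iff_map_eq_zero _).mpr fun x hfst ↦ Subtype.ext ?_
  by_contra hne
  exact hQ x x.2 hne (hypForm_eq_zero_of_fst_eq_zero hfst hfst)

theorem exists_equivariant_linearEquiv_of_codisjoint [FiniteDimensional K V]
    {G : Type*} [Group G] (ρ : Representation K G V) {P N : Submodule K (V × Dual K V)}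
    (hPstab : ∀ (g : G), ∀ x ∈ P, ((ρ g x.1, x.2 ∘ₗ ρ g⁻¹) : V × Dual K V) ∈ P)
    (hPN : Codisjoint P N)
    (hP : ∀ x ∈ P, x ≠ 0 → hypForm x x ≠ 0) (hN : ∀ x ∈ N, x ≠ 0 → hypForm x x ≠ 0) :
    ∃ e : P ≃ₗ[K] V, ∀ (g : G) (x : V × Dual K V) (hx : x ∈ P),
      e ⟨(ρ g x.1, x.2 ∘ₗ ρ g⁻¹), hPstab g x hx⟩ = ρ g (e ⟨x, hx⟩) := by
  have hdim : finrank K (V × Dual K V) = 2 * finrank K V := by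
    rw [finrank_prod, Subspace.dual_finrank_eq, two_mul]
  have hbij : Function.Bijective ((LinearMap.fst K V (Dual K V)).domRestrict P) :=
    bijective_domRestrict_of_codisjoint hdim.ge hPN
      (injective_fst_domRestrict_of_hypForm_self_ne_zero hP)
      (injective_fst_domRestrict_of_hypForm_self_ne_zero hN)
  exact ⟨.ofBijective _ hbij, fun _ _ _ ↦ rfl⟩

theorem hyp_decomposition_parts_iso_general [FiniteDimensional K V]
    {G : Type*} [Group G] (ρ : Representation K G V) (P N : Submodule K (V × Dual K V))
    (hPstab : ∀ (g : G), ∀ x ∈ P, ((ρ g x.1, x.2 ∘ₗ ρ g⁻¹) : V × Dual K V) ∈ P)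
    (hNstab : ∀ (g : G), ∀ x ∈ N, ((ρ g x.1, x.2 ∘ₗ ρ g⁻¹) : V × Dual K V) ∈ N)
    (hPN : Codisjoint P N)
    (hP : ∀ x ∈ P, x ≠ 0 → hypForm x x ≠ 0) (hN : ∀ x ∈ N, x ≠ 0 → hypForm x x ≠ 0) :
    (∃ e : P ≃ₗ[K] V, ∀ (g : G) (x : V × Dual K V) (hx : x ∈ P),
        e ⟨(ρ g x.1, x.2 ∘ₗ ρ g⁻¹), hPstab g x hx⟩ = ρ g (e ⟨x, hx⟩)) ∧
    (∃ e : N ≃ₗ[K] V, ∀ (g : G) (x : V × Dual K V) (hx : x ∈ N),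
        e ⟨(ρ g x.1, x.2 ∘ₗ ρ g⁻¹), hNstab g x hx⟩ = ρ g (e ⟨x, hx⟩)) :=
  ⟨exists_equivariant_linearEquiv_of_codisjoint ρ hPstab hPN hP hN,
    exists_equivariant_linearEquiv_of_codisjoint ρ hNstab hPN.symm hN hP⟩

end

/-- For a finite-dimensional real representation `V` of a finite group `G`, consider
`Hyp(V) = V ⊕ V^D` with the `G`-action `g ⬝ (v, f) = (g v, f ∘ g⁻¹)` and the hyperbolic
form `h((v,f),(v',f')) = f v' + f' v`.  For any decomposition `Hyp(V) = P ⊕ N` into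
`G`-invariant subspaces with `h` positive definite on `P` and negative definite on `N`,
both `P` and `N` are isomorphic to `V` as representations of `G`. -/
theorem hyp_decomposition_parts_iso {G V : Type*} [Group G] [Finite G]
    [AddCommGroup V] [Module ℝ V] [FiniteDimensional ℝ V]
    (ρ : Representation ℝ G V)
    (P N : Submodule ℝ (V × Module.Dual ℝ V))
    (hPstab : ∀ (g : G), ∀ x ∈ P, ((ρ g x.1, x.2 ∘ₗ ρ g⁻¹) : V × Module.Dual ℝ V) ∈ P)
    (hNstab : ∀ (g : G), ∀ x ∈ N, ((ρ g x.1, x.2 ∘ₗ ρ g⁻¹) : V × Module.Dual ℝ V) ∈ N)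
    (hcompl : IsCompl P N)
    (hpos : ∀ x ∈ P, x ≠ (0 : V × Module.Dual ℝ V) → 0 < hypForm x x)
    (hneg : ∀ x ∈ N, x ≠ (0 : V × Module.Dual ℝ V) → hypForm x x < 0) :
    (∃ e : P ≃ₗ[ℝ] V, ∀ (g : G) (x : V × Module.Dual ℝ V) (hx : x ∈ P),
        e ⟨(ρ g x.1, x.2 ∘ₗ ρ g⁻¹), hPstab g x hx⟩ = ρ g (e ⟨x, hx⟩)) ∧
    (∃ e : N ≃ₗ[ℝ] V, ∀ (g : G) (x : V × Module.Dual ℝ V) (hx : x ∈ N),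
        e ⟨(ρ g x.1, x.2 ∘ₗ ρ g⁻¹), hNstab g x hx⟩ = ρ g (e ⟨x, hx⟩)) :=
  hyp_decomposition_parts_iso_general ρ P N hPstab hNstab hcompl.codisjoint
    (fun x hx hne ↦ (hpos x hx hne).ne') (fun x hx hne ↦ (hneg x hx hne).ne)
end

section
/- Let K be a field of characteristic zero, G a finite group, and V a finite-dimensional K[G]-module with a non-degenerate K-valued G-invariant symmetric bilinear form σ. Let W be a G-submodule of V that is isotropic (σ vanishes identically on W × W), and let W^⊥ = {v ∈ V : σ(v,w) = 0 for all w ∈ W}. Then σ induces a non-degenerate G-invariant symmetric form on the quotient module W^⊥/W, and there is an isomorphism of K[G]-modules with forms (an orthogonal decomposition): V ≅ Hyp(W) ⊕ (W^⊥/W), where Hyp(W) = W ⊕ W^D carries the form h(w⊕f, w'⊕f') = f(w') + f'(w). -/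
/-- The subspace of vectors orthogonal to a submodule `W` with respect to a bilinear
form `σ`. -/
def orthTo {K V : Type*} [Field K] [AddCommGroup V] [Module K V]
    (σ : LinearMap.BilinForm K V) (W : Submodule K V) : Submodule K V where
  carrier := {v | ∀ w ∈ W, σ v w = 0}
  add_mem' := by
    intro a b ha hb w hw
    rw [map_add, LinearMap.add_apply, ha w hw, hb w hw, add_zero]
  zero_mem' := by intro w hw; simp
  smul_mem' := by
    intro c x hx w hw
    rw [map_smul, LinearMap.smul_apply, hx w hw, smul_zero]

/-- If `σ` is `G`-invariant and `W` is `G`-stable, then `W^⊥` is `G`-stable. -/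
theorem orthTo_stable {K V G : Type*} [Field K] [AddCommGroup V] [Module K V] [Group G]
    (ρ : Representation K G V) (σ : LinearMap.BilinForm K V)
    (hσinv : ∀ (g : G) (x y : V), σ (ρ g x) (ρ g y) = σ x y)
    (W : Submodule K V) (hWstab : ∀ g : G, ∀ x ∈ W, ρ g x ∈ W) :
    ∀ g : G, ∀ x ∈ orthTo σ W, ρ g x ∈ orthTo σ W := by
  intro g x hx w hw
  have hfix : ρ g (ρ g⁻¹ w) = w := by
    have h1 : ρ g * ρ g⁻¹ = 1 := by rw [← map_mul, mul_inv_cancel, map_one]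
    calc ρ g (ρ g⁻¹ w) = (ρ g * ρ g⁻¹) w := rfl
      _ = w := by rw [h1]; rfl
  have : σ (ρ g x) (ρ g (ρ g⁻¹ w)) = 0 := by
    rw [hσinv]
    exact hx _ (hWstab g⁻¹ w hw)
  rwa [hfix] at this

/-- The `G`-action induced on the quotient `W^⊥ / W`. -/
def qAct {K V G : Type*} [Field K] [AddCommGroup V] [Module K V] [Group G]
    (ρ : Representation K G V) (σ : LinearMap.BilinForm K V)
    (hσinv : ∀ (g : G) (x y : V), σ (ρ g x) (ρ g y) = σ x y)
    (W : Submodule K V) (hWstab : ∀ g : G, ∀ x ∈ W, ρ g x ∈ W) (g : G) :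
    (↥(orthTo σ W) ⧸ W.comap (orthTo σ W).subtype) →ₗ[K]
      (↥(orthTo σ W) ⧸ W.comap (orthTo σ W).subtype) :=
  Submodule.mapQ _ _ ((ρ g).restrict (orthTo_stable ρ σ hσinv W hWstab g))
    (by
      intro x hx
      simp only [Submodule.mem_comap, Submodule.subtype_apply,
        LinearMap.restrict_coe_apply] at hx ⊢
      exact hWstab g _ hx)

/-!
Let `C` be an invariant complement of `W^⊥`. The form pairs `C` perfectly with `W`, so there is a
unique `n : V → W` with `σ x (n y)` equal to `σ` of the `C`-components of `x` and `y`; replacing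
each `c ∈ C` by `c - n c / 2` makes `C` isotropic and keeps it an invariant complement. If `p` is
the projection onto this new `C` along `W^⊥`, its adjoint `p*` is a projection of `V` onto `W`,
and `x ↦ (p* x, σ x ·|_W, [x - p x])` is the required isometry.
-/

section Complement

variable {R V : Type*} [Ring R] [AddCommGroup V] [Module R V] {P C : Submodule R V}

theorem isCompl_map_id_sub (hC : IsCompl P C) {n : V →ₗ[R] V} (hn : ∀ x, n x ∈ P) :
    IsCompl P (C.map (LinearMap.id - n)) := by
  refine ⟨Submodule.disjoint_def.2 ?_, codisjoint_iff.2 (eq_top_iff.2 fun x _ => ?_)⟩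
  · rintro _ hP ⟨c, hc, rfl⟩
    have hcP : c ∈ P := by simpa using P.add_mem hP (hn c)
    simp [Submodule.disjoint_def.1 hC.disjoint c hcP hc]
  · obtain ⟨u, c, hu, hc, rfl⟩ := Submodule.codisjoint_iff_exists_add_eq.1 hC.codisjoint x
    exact Submodule.mem_sup.2
      ⟨u + n c, P.add_mem hu (hn c), c - n c, Submodule.mem_map_of_mem hc, by abel⟩

theorem projection_apply_comm (hC : IsCompl P C) {f : V →ₗ[R] V} (hfP : ∀ x ∈ P, f x ∈ P)
    (hfC : ∀ x ∈ C, f x ∈ C) (x : V) : P.projection C hC (f x) = f (P.projection C hC x) := by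
  have hcomm : Commute (P.projection C hC) f := by
    rw [LinearMap.IsIdempotentElem.commute_iff (Submodule.isIdempotentElem_projection hC),
      Submodule.range_projection, Submodule.ker_projection]
    exact ⟨hfP, hfC⟩
  exact LinearMap.congr_fun hcomm.eq x

end Complement

theorem exists_isCompl_stable {K V G : Type*} [Field K] [AddCommGroup V] [Module K V] [Monoid G]
    (ρ : Representation K G V) [ρ.IsSemisimpleRepresentation] {P : Submodule K V}
    (hP : ∀ g : G, ∀ x ∈ P, ρ g x ∈ P) :
    ∃ C : Submodule K V, IsCompl P C ∧ ∀ g : G, ∀ x ∈ C, ρ g x ∈ C := by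
  obtain ⟨C, hC⟩ := exists_isCompl (⟨P, hP⟩ : Subrepresentation ρ)
  refine ⟨C.toSubmodule, ⟨disjoint_iff.2 ?_, codisjoint_iff.2 ?_⟩, C.apply_mem_toSubmodule⟩
  · exact congrArg Subrepresentation.toSubmodule hC.inf_eq_bot
  · exact congrArg Subrepresentation.toSubmodule hC.sup_eq_top

section BilinForm

variable {K V G : Type*} [Field K] [AddCommGroup V] [Module K V] [Group G]
  {σ : LinearMap.BilinForm K V} {W C : Submodule K V}

section Duality

variable [FiniteDimensional K W]

variable (σ W) in
theorem map_flip_eq_dualAnnihilator_orthTo : W.map σ.flip = (orthTo σ W).dualAnnihilator := by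
  have hcoann : (W.map σ.flip).dualCoannihilator = orthTo σ W := by
    ext v
    simp [Submodule.mem_dualCoannihilator, orthTo]
  rw [← hcoann, Subspace.dualCoannihilator_dualAnnihilator_eq]

theorem flip_injective_of_separatingRight (hσ : σ.SeparatingRight) :
    Function.Injective σ.flip :=
  LinearMap.ker_eq_bot.1 (LinearMap.separatingRight_iff_flip_ker_eq_bot.1 hσ)

theorem mem_of_forall_mem_orthTo (hσ : σ.SeparatingRight) {v : V}
    (hv : ∀ x ∈ orthTo σ W, σ x v = 0) : v ∈ W := by
  have hmem : σ.flip v ∈ W.map σ.flip := by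
    rw [map_flip_eq_dualAnnihilator_orthTo]
    exact (Submodule.mem_dualAnnihilator _).2 hv
  obtain ⟨w, hw, hwv⟩ := hmem
  rwa [← flip_injective_of_separatingRight hσ hwv]

theorem domRestrict₂_surjective (hσ : σ.SeparatingRight) :
    Function.Surjective (σ.domRestrict₂ W) :=
  LinearMap.flip_injective_iff₂.1 <|
    (flip_injective_of_separatingRight hσ).comp W.subtype_injective

variable {U : Type*} [AddCommGroup U] [Module K U]

/-- The isomorphism `w ↦ σ · w` from `W` onto the functionals on `V` that vanish on `W^⊥`. -/
noncomputable def equivDualAnnihilatorOrthTo (hσ : σ.SeparatingRight) :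
    W ≃ₗ[K] (orthTo σ W).dualAnnihilator :=
  (Submodule.equivMapOfInjective σ.flip (flip_injective_of_separatingRight hσ) W).trans
    (LinearEquiv.ofEq _ _ (map_flip_eq_dualAnnihilator_orthTo σ W))

/-- The linear map `U → W` representing, through the second argument of `σ`, a family `β` of
functionals on `V` that vanish on `W^⊥`. -/
noncomputable def representer (hσ : σ.SeparatingRight) (β : U →ₗ[K] Module.Dual K V)
    (hβ : ∀ u, ∀ x ∈ orthTo σ W, β u x = 0) : U →ₗ[K] W :=
  (equivDualAnnihilatorOrthTo hσ).symm.toLinearMap ∘ₗ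
    β.codRestrict _ fun u => (Submodule.mem_dualAnnihilator _).2 (hβ u)

theorem apply_representer (hσ : σ.SeparatingRight) (β : U →ₗ[K] Module.Dual K V)
    (hβ : ∀ u, ∀ x ∈ orthTo σ W, β u x = 0) (x : V) (u : U) :
    σ x (representer hσ β hβ u) = β u x :=
  LinearMap.congr_fun (congrArg Subtype.val
    ((equivDualAnnihilatorOrthTo hσ).apply_symm_apply
      ⟨β u, (Submodule.mem_dualAnnihilator _).2 (hβ u)⟩)) x

theorem representer_equivariant (hσ : σ.SeparatingRight) {β : U →ₗ[K] Module.Dual K V}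
    (hβ : ∀ u, ∀ x ∈ orthTo σ W, β u x = 0) {f : U →ₗ[K] U} {f' : V →ₗ[K] V}
    (hf' : Function.Surjective f') (hσf' : ∀ x y, σ (f' x) (f' y) = σ x y)
    (hβf : ∀ u x, β (f u) (f' x) = β u x) (u : U) :
    (representer hσ β hβ (f u) : V) = f' (representer hσ β hβ u) := by
  rw [← sub_eq_zero]
  refine hσ _ fun x => ?_
  obtain ⟨x, rfl⟩ := hf' x
  rw [map_sub, apply_representer, hβf, hσf', apply_representer, sub_self]

end Duality

section QuotientForm

/-- The form induced by a reflexive form `σ` on `W^⊥ / (W ∩ W^⊥)`. -/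
def quotientForm (hσ : σ.IsRefl) (W : Submodule K V) :
    LinearMap.BilinForm K (orthTo σ W ⧸ W.comap (orthTo σ W).subtype) :=
  let N := W.comap (orthTo σ W).subtype
  (N.liftQ (N.liftQ (σ.domRestrict₁₂ (orthTo σ W) (orthTo σ W))
    (fun x hx => LinearMap.ext fun y => hσ _ _ (y.2 x hx))).flip
    (fun y hy => LinearMap.ext <| (Submodule.Quotient.mk_surjective _).forall.2 fun x =>
      x.2 y hy)).flip

theorem quotientForm_mk (hσ : σ.IsRefl) (x y : orthTo σ W) :
    quotientForm hσ W (Submodule.Quotient.mk x) (Submodule.Quotient.mk y) = σ x y :=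
  rfl

theorem quotientForm_isSymm (hσ : σ.IsSymm) (W : Submodule K V) :
    (quotientForm hσ.isRefl W).IsSymm :=
  ⟨(Submodule.Quotient.mk_surjective _).forall₂.2 fun x y => hσ.eq x y⟩

theorem quotientForm_isRefl (hσ : σ.IsRefl) (W : Submodule K V) :
    (quotientForm hσ W).IsRefl :=
  (Submodule.Quotient.mk_surjective _).forall₂.2 fun x y => hσ x y

theorem quotientForm_nondegenerate (hσ : σ.IsRefl) (hσnd : σ.SeparatingRight)
    (W : Submodule K V) [FiniteDimensional K W] : (quotientForm hσ W).Nondegenerate := by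
  refine (quotientForm_isRefl hσ W).nondegenerate_iff_separatingRight.2 ?_
  refine (Submodule.Quotient.mk_surjective _).forall.2 fun y hy => ?_
  rw [Submodule.Quotient.mk_eq_zero]
  exact mem_of_forall_mem_orthTo hσnd fun x hx => hy (Submodule.Quotient.mk ⟨x, hx⟩)

theorem quotientForm_qAct (hσ : σ.IsRefl) (ρ : Representation K G V)
    (hσinv : ∀ (g : G) (x y : V), σ (ρ g x) (ρ g y) = σ x y)
    (hWstab : ∀ g : G, ∀ x ∈ W, ρ g x ∈ W) (g : G)
    (a b : orthTo σ W ⧸ W.comap (orthTo σ W).subtype) :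
    quotientForm hσ W (qAct ρ σ hσinv W hWstab g a) (qAct ρ σ hσinv W hWstab g b) =
      quotientForm hσ W a b := by
  obtain ⟨x, rfl⟩ := Submodule.Quotient.mk_surjective _ a
  obtain ⟨y, rfl⟩ := Submodule.Quotient.mk_surjective _ b
  exact hσinv g x y

end QuotientForm

variable [FiniteDimensional K W]

theorem exists_isotropic_isCompl [NeZero (2 : K)] (hσ : σ.IsSymm) (hσnd : σ.SeparatingRight)
    (ρ : Representation K G V) (hσinv : ∀ (g : G) (x y : V), σ (ρ g x) (ρ g y) = σ x y)
    (hWstab : ∀ g : G, ∀ x ∈ W, ρ g x ∈ W) (hiso : ∀ x ∈ W, ∀ y ∈ W, σ x y = 0)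
    (hC : IsCompl (orthTo σ W) C) (hCstab : ∀ g : G, ∀ x ∈ C, ρ g x ∈ C) :
    ∃ C' : Submodule K V, IsCompl (orthTo σ W) C' ∧ (∀ g : G, ∀ x ∈ C', ρ g x ∈ C') ∧
      ∀ x ∈ C', ∀ y ∈ C', σ x y = 0 := by
  let p := C.projection (orthTo σ W) hC.symm
  have hp : ∀ c ∈ C, p c = c := fun c => Submodule.projection_apply_of_mem_left hC.symm
  have hpg : ∀ g x, p (ρ g x) = ρ g (p x) := fun g =>
    projection_apply_comm hC.symm (hCstab g) (orthTo_stable ρ σ hσinv W hWstab g)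
  let n : V →ₗ[K] W := representer hσnd (σ.compl₁₂ p p).flip fun y x hx => by
    simp [p, (Submodule.projection_apply_eq_zero_iff hC.symm).2 hx]
  have hn : ∀ x y, σ x (n y) = σ (p x) (p y) := apply_representer hσnd _ _
  have hng : ∀ g y, (n (ρ g y) : V) = ρ g (n y) := fun g =>
    representer_equivariant hσnd _ (ρ.apply_bijective g).surjective (hσinv g) fun y x => by
      simp [hpg, hσinv]
  refine ⟨C.map (LinearMap.id - (2⁻¹ : K) • W.subtype ∘ₗ n), isCompl_map_id_sub hC fun x => ?_,
    ?_, ?_⟩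
  · exact (orthTo σ W).smul_mem _ (hiso _ (n x).2)
  · rintro g _ ⟨c, hc, rfl⟩
    exact ⟨ρ g c, hCstab g c hc, by simp [hng]⟩
  · rintro _ ⟨c, hc, rfl⟩ _ ⟨d, hd, rfl⟩
    have hcd : σ c (n d) = σ c d := by rw [hn, hp c hc, hp d hd]
    have hdc : σ (n c) d = σ c d := by rw [hσ.eq, hn, hp c hc, hp d hd, hσ.eq]
    calc σ (c - (2⁻¹ : K) • (n c : V)) (d - (2⁻¹ : K) • (n d : V))
        = σ c d - 2⁻¹ * σ c (n d) - 2⁻¹ * (σ (n c) d - 2⁻¹ * σ (n c) (n d)) := by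
          simp only [map_sub, map_smul, LinearMap.sub_apply, LinearMap.smul_apply, smul_eq_mul]
          ring
      _ = σ c d - 2⁻¹ * σ c d - 2⁻¹ * (σ c d - 2⁻¹ * 0) := by
          rw [hcd, hdc, hiso _ (n c).2 _ (n d).2]
      _ = 0 := by
          field_simp
          ring

section HyperbolicMap

/-- The adjoint, with values in `W`, of the projection of `V` onto `C` along `W^⊥`. -/
noncomputable def adjointProjection (hσ : σ.SeparatingRight) (hC : IsCompl (orthTo σ W) C) :
    V →ₗ[K] W :=
  representer hσ (σ ∘ₗ C.projection (orthTo σ W) hC.symm).flip fun y x hx => by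
    simp [(Submodule.projection_apply_eq_zero_iff hC.symm).2 hx]

theorem apply_adjointProjection (hσ : σ.SeparatingRight) (hC : IsCompl (orthTo σ W) C) (x y : V) :
    σ x (adjointProjection hσ hC y) = σ (C.projection (orthTo σ W) hC.symm x) y :=
  apply_representer hσ _ _ x y

theorem adjointProjection_coe (hσ : σ.SeparatingRight) (hC : IsCompl (orthTo σ W) C) (w : W) :
    adjointProjection hσ hC (w : V) = w := by
  rw [← sub_eq_zero]
  refine Subtype.ext (hσ _ fun x => ?_)
  have hx := Submodule.sub_projection_mem hC.symm x w w.2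
  rw [map_sub, LinearMap.sub_apply] at hx
  rw [AddSubgroupClass.coe_sub, map_sub, apply_adjointProjection, ← neg_sub, hx, neg_zero]

theorem adjointProjection_eq_zero (hσ : σ.SeparatingRight) (hC : IsCompl (orthTo σ W) C)
    (hCiso : ∀ x ∈ C, ∀ y ∈ C, σ x y = 0) {c : V} (hc : c ∈ C) :
    adjointProjection hσ hC c = 0 := by
  refine Subtype.ext (hσ _ fun x => ?_)
  rw [apply_adjointProjection]
  exact hCiso _ (Submodule.projection_apply_mem hC.symm x) c hc

/-- The map `V → Hyp(W) ⊕ W^⊥/W` attached to a complement `C` of `W^⊥`. When `C` is isotropic it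
identifies `C` with `W^D`. -/
noncomputable def hyperbolicMap (hσ : σ.SeparatingRight) (hC : IsCompl (orthTo σ W) C) :
    V →ₗ[K] (W × Module.Dual K W) × (orthTo σ W ⧸ W.comap (orthTo σ W).subtype) :=
  ((adjointProjection hσ hC).prod (σ.domRestrict₂ W)).prod
    ((W.comap (orthTo σ W).subtype).mkQ ∘ₗ (orthTo σ W).projectionOnto C hC)

theorem hyperbolicMap_isometry (hσ : σ.IsSymm) (hσnd : σ.SeparatingRight)
    (hC : IsCompl (orthTo σ W) C) (hCiso : ∀ x ∈ C, ∀ y ∈ C, σ x y = 0) (x y : V) :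
    σ x y = (hyperbolicMap hσnd hC x).1.2 (hyperbolicMap hσnd hC y).1.1 +
      (hyperbolicMap hσnd hC y).1.2 (hyperbolicMap hσnd hC x).1.1 +
      quotientForm hσ.isRefl W (hyperbolicMap hσnd hC x).2 (hyperbolicMap hσnd hC y).2 := by
  let p := C.projection (orthTo σ W) hC.symm
  let r := (orthTo σ W).projection C hC
  have hpr : ∀ v, v = p v + r v := fun v =>
    (Submodule.projection_add_projection_eq_self hC.symm v).symm
  have hpp : σ (p x) (p y) = 0 :=
    hCiso _ (Submodule.projection_apply_mem _ x) _ (Submodule.projection_apply_mem _ y)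
  change σ x y = σ x (adjointProjection hσnd hC y) + σ y (adjointProjection hσnd hC x) +
    σ (r x) (r y)
  calc σ x y = σ (p x) y + σ (r x) y := by
        rw [← LinearMap.add_apply, ← map_add, ← hpr]
    _ = σ (p x) y + (σ (r x) (p y) + σ (r x) (r y)) := by rw [← map_add, ← hpr y]
    _ = σ (p x) y + σ x (p y) + σ (r x) (r y) := by
        nth_rw 5 [hpr x]
        rw [map_add, LinearMap.add_apply, hpp]
        ring
    _ = _ := by rw [apply_adjointProjection, apply_adjointProjection, hσ.eq x (p y)]

theorem hyperbolicMap_injective (hσ : σ.IsSymm) (hσnd : σ.Nondegenerate)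
    (hC : IsCompl (orthTo σ W) C) (hCiso : ∀ x ∈ C, ∀ y ∈ C, σ x y = 0) :
    Function.Injective (hyperbolicMap hσnd.2 hC) := by
  rw [injective_iff_map_eq_zero]
  intro x hx
  refine hσnd.1 x fun y => ?_
  rw [hyperbolicMap_isometry hσ hσnd.2 hC hCiso, hx]
  simp

theorem hyperbolicMap_surjective (hσ : σ.SeparatingRight) (hiso : ∀ x ∈ W, ∀ y ∈ W, σ x y = 0)
    (hC : IsCompl (orthTo σ W) C) (hCiso : ∀ x ∈ C, ∀ y ∈ C, σ x y = 0) :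
    Function.Surjective (hyperbolicMap hσ hC) := by
  rintro ⟨⟨w, φ⟩, a⟩
  obtain ⟨u, rfl⟩ := Submodule.Quotient.mk_surjective _ a
  obtain ⟨v, rfl⟩ := domRestrict₂_surjective hσ φ
  let c := C.projection (orthTo σ W) hC.symm v
  let b := adjointProjection hσ hC u
  have hc : c ∈ C := Submodule.projection_apply_mem hC.symm v
  have hvc : v - c ∈ orthTo σ W := Submodule.sub_projection_mem hC.symm v
  let y : orthTo σ W := ⟨w + (u - b), add_mem (hiso w w.2) (sub_mem u.2 (hiso b b.2))⟩
  refine ⟨y + c, Prod.ext (Prod.ext ?_ (LinearMap.ext fun z => ?_)) ?_⟩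
  · change adjointProjection hσ hC (w + (u - b) + c) = w
    rw [map_add, map_add, map_sub, adjointProjection_coe, adjointProjection_coe,
      adjointProjection_eq_zero hσ hC hCiso hc, sub_self, add_zero, add_zero]
  · change σ (y + c) z = σ v z
    have hvcz := hvc z z.2
    rw [map_sub, LinearMap.sub_apply, sub_eq_zero] at hvcz
    rw [map_add, LinearMap.add_apply, y.2 z z.2, zero_add, hvcz]
  · change Submodule.Quotient.mk ((orthTo σ W).projectionOnto C hC (y + c)) = _
    have hproj : (orthTo σ W).projectionOnto C hC (y + c) = y := by
      rw [map_add, Submodule.projectionOnto_apply_left,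
        (Submodule.projectionOnto_apply_eq_zero_iff hC).2 hc, add_zero]
    rw [hproj, Submodule.Quotient.eq]
    have hyu : (y : V) - u = w - b := by simp only [y]; abel
    simpa [hyu] using sub_mem w.2 b.2

theorem hyperbolicMap_equivariant (hσ : σ.SeparatingRight) (hC : IsCompl (orthTo σ W) C)
    (ρ : Representation K G V) (hσinv : ∀ (g : G) (x y : V), σ (ρ g x) (ρ g y) = σ x y)
    (hWstab : ∀ g : G, ∀ x ∈ W, ρ g x ∈ W) (hCstab : ∀ g : G, ∀ x ∈ C, ρ g x ∈ C)
    (g : G) (x : V) :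
    hyperbolicMap hσ hC (ρ g x) =
      (((ρ g).restrict (hWstab g) (hyperbolicMap hσ hC x).1.1,
        (hyperbolicMap hσ hC x).1.2 ∘ₗ (ρ g⁻¹).restrict (hWstab g⁻¹)),
       qAct ρ σ hσinv W hWstab g (hyperbolicMap hσ hC x).2) := by
  have hOstab := orthTo_stable ρ σ hσinv W hWstab
  refine Prod.ext (Prod.ext (Subtype.ext ?_) (LinearMap.ext fun w => ?_)) ?_
  · refine representer_equivariant hσ _ (ρ.apply_bijective g).surjective (hσinv g) (fun y z => ?_) x
    simp [projection_apply_comm hC.symm (hCstab g) (hOstab g), hσinv]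
  · change σ (ρ g x) w = σ x (ρ g⁻¹ w)
    rw [← hσinv g x, ρ.self_inv_apply]
  · refine congrArg Submodule.Quotient.mk (Subtype.ext ?_)
    exact projection_apply_comm hC (hOstab g) (hCstab g) x

end HyperbolicMap

end BilinForm

theorem isotropic_hyperbolic_decomposition_general {K V G : Type*} [Field K] [NeZero (2 : K)]
    [AddCommGroup V] [Module K V] [Group G]
    (ρ : Representation K G V) (σ : LinearMap.BilinForm K V)
    (hσsymm : ∀ x y, σ x y = σ y x)
    (hσnd : LinearMap.BilinForm.Nondegenerate σ)
    (hσinv : ∀ (g : G) (x y : V), σ (ρ g x) (ρ g y) = σ x y)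
    (W : Submodule K V) [FiniteDimensional K W] (hWstab : ∀ g : G, ∀ x ∈ W, ρ g x ∈ W)
    (hiso : ∀ x ∈ W, ∀ y ∈ W, σ x y = 0)
    (hcompl : ∃ C : Submodule K V, IsCompl (orthTo σ W) C ∧ ∀ g : G, ∀ x ∈ C, ρ g x ∈ C) :
    ∃ σQ : LinearMap.BilinForm K (↥(orthTo σ W) ⧸ W.comap (orthTo σ W).subtype),
      (∀ x y : ↥(orthTo σ W),
        σQ (Submodule.Quotient.mk x) (Submodule.Quotient.mk y) = σ ↑x ↑y) ∧
      (∀ a b, σQ a b = σQ b a) ∧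
      LinearMap.BilinForm.Nondegenerate σQ ∧
      (∀ (g : G) (a b : ↥(orthTo σ W) ⧸ W.comap (orthTo σ W).subtype),
        σQ (qAct ρ σ hσinv W hWstab g a) (qAct ρ σ hσinv W hWstab g b) = σQ a b) ∧
      ∃ e : V ≃ₗ[K]
          (↥W × Module.Dual K ↥W) × (↥(orthTo σ W) ⧸ W.comap (orthTo σ W).subtype),
        (∀ x y : V,
          σ x y = (e x).1.2 (e y).1.1 + (e y).1.2 (e x).1.1 + σQ (e x).2 (e y).2) ∧
        (∀ (g : G) (x : V),
          e (ρ g x) =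
            (((ρ g).restrict (hWstab g) (e x).1.1,
              (e x).1.2 ∘ₗ (ρ g⁻¹).restrict (hWstab g⁻¹)),
             qAct ρ σ hσinv W hWstab g (e x).2)) := by
  have hσ : σ.IsSymm := ⟨hσsymm⟩
  obtain ⟨C₀, hC₀, hC₀stab⟩ := hcompl
  obtain ⟨C, hC, hCstab, hCiso⟩ :=
    exists_isotropic_isCompl hσ hσnd.2 ρ hσinv hWstab hiso hC₀ hC₀stab
  let e := LinearEquiv.ofBijective (hyperbolicMap hσnd.2 hC)
    ⟨hyperbolicMap_injective hσ hσnd hC hCiso, hyperbolicMap_surjective hσnd.2 hiso hC hCiso⟩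
  exact ⟨quotientForm hσ.isRefl W, quotientForm_mk hσ.isRefl, (quotientForm_isSymm hσ W).eq,
    quotientForm_nondegenerate hσ.isRefl hσnd.2 W,
    quotientForm_qAct hσ.isRefl ρ hσinv hWstab, e,
    hyperbolicMap_isometry hσ hσnd.2 hC hCiso,
    hyperbolicMap_equivariant hσnd.2 hC ρ hσinv hWstab hCstab⟩

/-- For an isotropic `G`-submodule `W` of a `K[G]`-module `V` with non-degenerate
`G`-invariant symmetric form `σ`, the form `σ` induces a non-degenerate `G`-invariant
symmetric form on `W^⊥ / W`, and there is an orthogonal `G`-decomposition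
`V ≅ Hyp(W) ⊕ W^⊥/W`, where `Hyp(W) = W ⊕ W^D` carries the hyperbolic form. -/
theorem isotropic_hyperbolic_decomposition {K V G : Type*} [Field K] [CharZero K]
    [AddCommGroup V] [Module K V] [FiniteDimensional K V] [Group G] [Finite G]
    (ρ : Representation K G V) (σ : LinearMap.BilinForm K V)
    (hσsymm : ∀ x y, σ x y = σ y x)
    (hσnd : LinearMap.BilinForm.Nondegenerate σ)
    (hσinv : ∀ (g : G) (x y : V), σ (ρ g x) (ρ g y) = σ x y)
    (W : Submodule K V) (hWstab : ∀ g : G, ∀ x ∈ W, ρ g x ∈ W)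
    (hiso : ∀ x ∈ W, ∀ y ∈ W, σ x y = 0) :
    ∃ σQ : LinearMap.BilinForm K (↥(orthTo σ W) ⧸ W.comap (orthTo σ W).subtype),
      (∀ x y : ↥(orthTo σ W),
        σQ (Submodule.Quotient.mk x) (Submodule.Quotient.mk y) = σ ↑x ↑y) ∧
      (∀ a b, σQ a b = σQ b a) ∧
      LinearMap.BilinForm.Nondegenerate σQ ∧
      (∀ (g : G) (a b : ↥(orthTo σ W) ⧸ W.comap (orthTo σ W).subtype),
        σQ (qAct ρ σ hσinv W hWstab g a) (qAct ρ σ hσinv W hWstab g b) = σQ a b) ∧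
      ∃ e : V ≃ₗ[K]
          (↥W × Module.Dual K ↥W) × (↥(orthTo σ W) ⧸ W.comap (orthTo σ W).subtype),
        (∀ x y : V,
          σ x y = (e x).1.2 (e y).1.1 + (e y).1.2 (e x).1.1 + σQ (e x).2 (e y).2) ∧
        (∀ (g : G) (x : V),
          e (ρ g x) =
            (((ρ g).restrict (hWstab g) (e x).1.1,
              (e x).1.2 ∘ₗ (ρ g⁻¹).restrict (hWstab g⁻¹)),
             qAct ρ σ hσinv W hWstab g (e x).2)) := by
  exact isotropic_hyperbolic_decomposition_general ρ σ hσsymm hσnd hσinv W hWstab hiso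
    (exists_isCompl_stable ρ (orthTo_stable ρ σ hσinv W hWstab))
end
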